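/- arXiv:math/0507156 — 4 statements merged into one kernel-verified Lean document; each statement's English description precedes it below -/
import Mathlib

section
/- Let T be a bounded operator on ℓ²(𝔽ₙ⁺) that commutes with each right creation operator R₁,…,Rₙ (i.e., T belongs to the noncommutative analytic Toeplitz algebra Fₙ^∞), and define its coefficients a_α := ⟨T e_{g₀}, e_α⟩ for α ∈ 𝔽ₙ⁺. Then for every complex Hilbert space 𝒦 and every (T₁,…,Tₙ) ∈ [B(𝒦)ⁿ]_{1/3}, one has ∑_{k=0}^∞ ‖∑_{|α|=k} |a_α| T_α‖ ≤ ‖T‖; in particular, ∑_{α ∈ 𝔽ₙ⁺} |a_α| r_α ≤ ‖T‖ for every tuple r of nonnegative reals with ‖r‖₂ ≤ 1/3. -/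
open scoped BigOperators

/-- The full Fock space, identified with `ℓ²(𝔽ₙ⁺)` where the free monoid `𝔽ₙ⁺` on `n`
generators is identified with `List (Fin n)`. -/
noncomputable abbrev Fock (n : ℕ) : Type := lp (fun _ : List (Fin n) => ℂ) 2

/-- The orthonormal basis vector `e_α` of the Fock space. -/
noncomputable def fockBasis (n : ℕ) (α : List (Fin n)) : Fock n := lp.single 2 α 1

/-- For a word `α = g_{i₁} ⋯ g_{i_k}`, the product `T_α = T_{i₁} ⋯ T_{i_k}` (and `T_{g₀} = 1`). -/
noncomputable def wordProd {n : ℕ} {M : Type*} [Monoid M] (T : Fin n → M)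
    (α : List (Fin n)) : M :=
  (α.map T).prod

/-- `fm m t = ∑_{k=1}^{m-1} t^k * cos (π / (⌊(m-1)/k⌋ + 2))`. -/
noncomputable def fm (m : ℕ) (t : ℝ) : ℝ :=
  ∑ k ∈ Finset.Icc 1 (m - 1), t ^ k * Real.cos (Real.pi / (((m - 1) / k + 2 : ℕ) : ℝ))

lemma fb_apply (n : ℕ) (α β : List (Fin n)) :
    (fockBasis n α) β = if β = α then (1 : ℂ) else 0 := by
  unfold fockBasis
  rw [lp.single_apply, Pi.single_apply]

lemma fock_hasSum (n : ℕ) (f : Fock n) :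
    HasSum (fun α => (f α) • fockBasis n α) f := by
  have h := lp.hasSum_single (E := fun _ : List (Fin n) => ℂ) (p := 2) (by norm_num) f
  convert h using 2 with α
  unfold fockBasis
  rw [← lp.single_smul]
  simp

lemma fock_eval_hasSum (n : ℕ) {ι : Type*} (g : ι → Fock n) (f : Fock n) (h : HasSum g f)
    (γ : List (Fin n)) : HasSum (fun i => g i γ) (f γ) := by
  exact h.mapL (lp.evalCLM ℂ (fun _ : List (Fin n) => ℂ) 2 γ)

lemma fockR_apply (n : ℕ) (R : Fin n → Fock n →L[ℂ] Fock n)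
    (hR : ∀ (i : Fin n) (α : List (Fin n)), R i (fockBasis n α) = fockBasis n (α ++ [i]))
    (i : Fin n) (f : Fock n) (γ : List (Fin n)) :
    HasSum (fun α => f α * (if γ = α ++ [i] then (1:ℂ) else 0)) (R i f γ) := by
  have h := fock_eval_hasSum n _ _ ((fock_hasSum n f).mapL (R i)) γ
  convert h using 2 with α
  rw [map_smul, hR, lp.coeFn_smul, Pi.smul_apply, fb_apply, smul_eq_mul]

lemma fockT_apply (n : ℕ) (R : Fin n → Fock n →L[ℂ] Fock n)
    (hR : ∀ (i : Fin n) (α : List (Fin n)), R i (fockBasis n α) = fockBasis n (α ++ [i]))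
    (T : Fock n →L[ℂ] Fock n) (hT : ∀ i : Fin n, T * R i = R i * T) (β : List (Fin n)) :
    ∀ γ : List (Fin n), γ.length ≤ β.length →
      T (fockBasis n β) γ = if γ = β then T (fockBasis n []) [] else 0 := by
  induction β using List.reverseRecOn with
  | nil => intro γ h; obtain rfl : γ = [] := by simpa using h
           simp
  | append_singleton β i ih =>
    intro γ h
    have e : T (fockBasis n (β ++ [i])) = R i (T (fockBasis n β)) := by
      rw [← hR]; exact congrArg (fun S => S (fockBasis n β)) (hT i)
    rw [e]
    have hs := fockR_apply n R hR i (T (fockBasis n β)) γ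
    rcases List.eq_nil_or_concat γ with rfl | ⟨δ, j, rfl⟩
    · simp at hs ⊢
      exact hs.unique hasSum_zero
    · simp only [List.concat_eq_append] at *
      have hl : δ.length ≤ β.length := by simpa using h
      by_cases hj : j = i
      · subst hj
        have h2 := hasSum_single (f := fun α => T (fockBasis n β) α *
          (if δ ++ [j] = α ++ [j] then (1:ℂ) else 0)) δ (by
            intro α hα
            rw [if_neg, mul_zero]
            simpa using hα.symm)
        rw [hs.unique h2]
        simp [ih δ hl]
      · have h2 : (fun α => T (fockBasis n β) α *
          (if δ ++ [j] = α ++ [i] then (1:ℂ) else 0)) = fun _ => 0 := by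
          funext α
          rw [if_neg, mul_zero]
          simp [hj]
        rw [h2] at hs
        rw [hs.unique hasSum_zero, if_neg]
        simp [hj]

lemma fock_sum_le (n : ℕ) (f : Fock n) (s : Finset (List (Fin n))) :
    ∑ α ∈ s, ‖f α‖ ^ 2 ≤ ‖f‖ ^ 2 := by
  have := lp.sum_rpow_le_norm_rpow (E := fun _ : List (Fin n) => ℂ) (p := 2) (by norm_num) f s
  simpa using this

lemma fock_norm_sq (n : ℕ) (f : Fock n) (s : Finset (List (Fin n))) (h : ∀ α ∉ s, f α = 0) :
    ‖f‖ ^ 2 = ∑ α ∈ s, ‖f α‖ ^ 2 := by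
  have := lp.hasSum_norm (E := fun _ : List (Fin n) => ℂ) (p := 2) (by norm_num) f
  simp only [ENNReal.toReal_ofNat, Real.rpow_ofNat] at this
  exact this.unique (hasSum_sum_of_ne_finset_zero (fun α hα => by simp [h α hα]))

/-- words of length k -/
noncomputable def wordsOf (n k : ℕ) : Finset (List (Fin n)) :=
  Finset.univ.map ⟨fun w : Fin k → Fin n => List.ofFn w, List.ofFn_injective⟩

lemma mem_wordsOf {n k : ℕ} {α : List (Fin n)} (h : α ∈ wordsOf n k) : α.length = k := by
  simp only [wordsOf, Finset.mem_map, Finset.mem_univ, true_and, Function.Embedding.coeFn_mk] at h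
  obtain ⟨w, rfl⟩ := h
  simp

lemma key (n : ℕ) (R : Fin n → Fock n →L[ℂ] Fock n)
    (hR : ∀ (i : Fin n) (α : List (Fin n)), R i (fockBasis n α) = fockBasis n (α ++ [i]))
    (T : Fock n →L[ℂ] Fock n) (hT : ∀ i : Fin n, T * R i = R i * T)
    (k : ℕ) (hk : 1 ≤ k) (s c : ℂ) :
    ‖s * T (fockBasis n []) []‖ ^ 2 +
      ‖s + c * T (fockBasis n []) []‖ ^ 2 * ∑ α ∈ wordsOf n k, ‖T (fockBasis n []) α‖ ^ 2 ≤
    ‖T‖ ^ 2 * (‖s‖ ^ 2 + ‖c‖ ^ 2 * ∑ α ∈ wordsOf n k, ‖T (fockBasis n []) α‖ ^ 2) := by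
  set a : List (Fin n) → ℂ := fun α => T (fockBasis n []) α with ha
  have hnil : ([] : List (Fin n)) ∉ wordsOf n k := by
    intro h; have := mem_wordsOf h; simp at this; omega
  let u : Fock n := ∑ α ∈ wordsOf n k, a α • fockBasis n α
  let x : Fock n := s • fockBasis n [] + c • u
  have sum_eval : ∀ (t : Finset (List (Fin n))) (g : List (Fin n) → Fock n) (γ : List (Fin n)),
      (∑ α ∈ t, g α) γ = ∑ α ∈ t, g α γ := by
    intro t g γ
    rw [lp.coeFn_sum, Finset.sum_apply]
  have hu : ∀ γ, u γ = if γ ∈ wordsOf n k then a γ else 0 := by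
    intro γ
    simp only [u, sum_eval, lp.coeFn_smul, Pi.smul_apply, fb_apply, smul_eq_mul, mul_ite, mul_one,
      mul_zero, Finset.sum_ite_eq]
  have hx : ∀ γ, x γ = s * (if γ = [] then 1 else 0) + c * (if γ ∈ wordsOf n k then a γ else 0) := by
    intro γ
    simp only [x, lp.coeFn_add, lp.coeFn_smul, Pi.add_apply, Pi.smul_apply, smul_eq_mul, hu, fb_apply]
  have hTx : ∀ γ, T x γ = s * a γ + c * ∑ α ∈ wordsOf n k, a α * T (fockBasis n α) γ := by
    intro γ
    simp only [x, u, map_add, map_smul, map_sum, lp.coeFn_add, lp.coeFn_smul, Pi.add_apply,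
      Pi.smul_apply, smul_eq_mul, sum_eval, ha]
  have h1 : T x [] = s * a [] := by
    rw [hTx, Finset.sum_eq_zero, mul_zero, add_zero]
    intro α hα
    rw [fockT_apply n R hR T hT α [] (by simp), if_neg, mul_zero]
    rintro rfl
    exact hnil hα
  have h2 : ∀ γ ∈ wordsOf n k, T x γ = (s + c * a []) * a γ := by
    intro γ hγ
    rw [hTx, Finset.sum_eq_single γ]
    · rw [fockT_apply n R hR T hT γ γ le_rfl, if_pos rfl]; ring
    · intro α hα hne
      rw [fockT_apply n R hR T hT α γ (by rw [mem_wordsOf hα, mem_wordsOf hγ]), if_neg hne.symm,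
        mul_zero]
    · intro h; exact absurd hγ h
  have h3 := fock_sum_le n (T x) (insert [] (wordsOf n k))
  rw [Finset.sum_insert hnil, h1, Finset.sum_congr rfl (fun γ hγ => by rw [h2 γ hγ])] at h3
  have h4 := fock_norm_sq n x (insert [] (wordsOf n k)) (by
    intro α hα
    rw [Finset.mem_insert, not_or] at hα
    rw [hx, if_neg hα.1, if_neg hα.2]; simp)
  rw [Finset.sum_insert hnil, hx, if_pos rfl, if_neg hnil,
    Finset.sum_congr rfl (fun γ hγ => by
      rw [hx γ, if_pos hγ, if_neg (by rintro rfl; exact hnil hγ)])] at h4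
  simp only [mul_one, mul_zero, add_zero, zero_add, norm_mul, mul_pow, ← Finset.mul_sum] at h3 h4 ⊢
  have h5 : ‖T x‖ ^ 2 ≤ ‖T‖ ^ 2 * ‖x‖ ^ 2 := by
    rw [← mul_pow]; gcongr; exact T.le_opNorm x
  rw [h4] at h5
  exact h3.trans h5

lemma coeff_bound (n : ℕ) (R : Fin n → Fock n →L[ℂ] Fock n)
    (hR : ∀ (i : Fin n) (α : List (Fin n)), R i (fockBasis n α) = fockBasis n (α ++ [i]))
    (T : Fock n →L[ℂ] Fock n) (hT : ∀ i : Fin n, T * R i = R i * T) :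
    ∃ B : ℝ, 0 ≤ B ∧ ‖T (fockBasis n []) []‖ + B / 2 ≤ ‖T‖ ∧
      ∀ k, 1 ≤ k → Real.sqrt (∑ α ∈ wordsOf n k, ‖T (fockBasis n []) α‖ ^ 2) ≤ B := by
  set z := T (fockBasis n []) [] with hz
  have hM : 0 ≤ ‖T‖ := norm_nonneg T
  have hx0 : 0 ≤ ‖z‖ := norm_nonneg z
  have hS : ∀ k, 0 ≤ ∑ α ∈ wordsOf n k, ‖T (fockBasis n []) α‖ ^ 2 :=
    fun k => Finset.sum_nonneg (fun _ _ => by positivity)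
  have k1 : ∀ k, 1 ≤ k → ‖z‖ ^ 2 + ∑ α ∈ wordsOf n k, ‖T (fockBasis n []) α‖ ^ 2 ≤ ‖T‖ ^ 2 := by
    intro k hk
    have := key n R hR T hT k hk 1 0
    simpa using this
  have hzM : ‖z‖ ≤ ‖T‖ := by
    have h1 := k1 1 le_rfl
    have h2 := hS 1
    exact abs_le_of_sq_le_sq' (by linarith) hM |>.2
  have k2 : ∀ k, 1 ≤ k → ‖T‖ ^ 2 * (∑ α ∈ wordsOf n k, ‖T (fockBasis n []) α‖ ^ 2) ≤
      (‖T‖ ^ 2 - ‖z‖ ^ 2) ^ 2 := by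
    intro k hk
    have h1 := k1 k hk
    have h2 := hS k
    have h3 := key n R hR T hT k hk ((‖T‖ ^ 2 - ‖z‖ ^ 2 : ℝ) : ℂ) ((starRingEnd ℂ) z)
    rw [← hz, Complex.conj_mul'] at h3
    have e : (((‖T‖ ^ 2 - ‖z‖ ^ 2 : ℝ) : ℂ) + (‖z‖ : ℂ) ^ 2) = ((‖T‖ ^ 2 : ℝ) : ℂ) := by
      push_cast; ring
    rw [e, norm_mul, Complex.norm_real, Complex.norm_real, RCLike.norm_conj, Real.norm_eq_abs,
      Real.norm_eq_abs, mul_pow, sq_abs, sq_abs] at h3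
    generalize (∑ α ∈ wordsOf n k, ‖T (fockBasis n []) α‖ ^ 2) = S at *
    generalize ‖T‖ = M at *
    generalize ‖z‖ = x at *
    have hs : 0 ≤ M ^ 2 - x ^ 2 := by linarith
    rcases hs.eq_or_lt with h0 | hpos
    · have : S = 0 := by linarith
      rw [this]; nlinarith
    · refine le_of_mul_le_mul_left ?_ hpos
      nlinarith
  refine ⟨(‖T‖ ^ 2 - ‖z‖ ^ 2) / ‖T‖, ?_, ?_, ?_⟩
  · apply div_nonneg _ hM
    nlinarith
  · rcases hM.eq_or_lt with h0 | hpos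
    · rw [← h0] at hzM ⊢; simpa using hzM
    · rw [← sub_nonneg]
      have : ‖T‖ - (‖z‖ + (‖T‖ ^ 2 - ‖z‖ ^ 2) / ‖T‖ / 2) = (‖T‖ - ‖z‖) ^ 2 / (2 * ‖T‖) := by
        field_simp; ring
      rw [this]; positivity
  · intro k hk
    rcases hM.eq_or_lt with h0 | hpos
    · have h1 := k1 k hk
      have h2 := hS k
      rw [← h0] at h1 ⊢
      have : ∑ α ∈ wordsOf n k, ‖T (fockBasis n []) α‖ ^ 2 = 0 := by nlinarith
      rw [this]; simp
    · rw [le_div_iff₀ hpos]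
      apply (abs_le_of_sq_le_sq' _ _).2
      · rw [mul_pow, Real.sq_sqrt (hS k), mul_comm]; exact k2 k hk
      · nlinarith

lemma row_ineq {n : ℕ} {K : Type*} [NormedAddCommGroup K] [InnerProductSpace ℂ K] [CompleteSpace K]
    (T : Fin n → K →L[ℂ] K) (y : Fin n → K) :
    ‖∑ i, T i (y i)‖ ^ 2 ≤ ‖∑ i, T i * ContinuousLinearMap.adjoint (T i)‖ * ∑ i, ‖y i‖ ^ 2 := by
  set z := ∑ i, T i (y i) with hz
  set P := ∑ i, T i * ContinuousLinearMap.adjoint (T i) with hP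
  have h1 : ∑ i, ‖ContinuousLinearMap.adjoint (T i) z‖ ^ 2 ≤ ‖P‖ * ‖z‖ ^ 2 := by
    have e : ((∑ i, ‖ContinuousLinearMap.adjoint (T i) z‖ ^ 2 : ℝ) : ℂ) = inner ℂ z (P z) := by
      rw [hP, sum_apply, inner_sum]
      push_cast
      refine Finset.sum_congr rfl (fun i _ => ?_)
      change _ = inner ℂ z (T i (ContinuousLinearMap.adjoint (T i) z))
      rw [← ContinuousLinearMap.adjoint_inner_left,
        inner_self_eq_norm_sq_to_K]
      rfl
    calc _ ≤ ‖((∑ i, ‖ContinuousLinearMap.adjoint (T i) z‖ ^ 2 : ℝ) : ℂ)‖ := by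
            rw [Complex.norm_real]; exact le_abs_self _
      _ = ‖inner ℂ z (P z)‖ := by rw [e]
      _ ≤ ‖z‖ * ‖P z‖ := norm_inner_le_norm _ _
      _ ≤ ‖z‖ * (‖P‖ * ‖z‖) := by gcongr; exact P.le_opNorm z
      _ = _ := by ring
  have h2 : ‖z‖ ^ 2 ≤ ∑ i, ‖ContinuousLinearMap.adjoint (T i) z‖ * ‖y i‖ := by
    have e : ((‖z‖ ^ 2 : ℝ) : ℂ) = ∑ i, inner ℂ (ContinuousLinearMap.adjoint (T i) z) (y i) := by
      have : inner ℂ z z = ((‖z‖ ^ 2 : ℝ) : ℂ) := by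
        rw [inner_self_eq_norm_sq_to_K]; push_cast; rfl
      rw [← this]
      nth_rewrite 2 [hz]
      rw [inner_sum]
      exact Finset.sum_congr rfl (fun i _ => (ContinuousLinearMap.adjoint_inner_left _ _ _).symm)
    calc _ ≤ ‖((‖z‖ ^ 2 : ℝ) : ℂ)‖ := by
            rw [Complex.norm_real]; exact le_abs_self _
      _ ≤ _ := by
        rw [e]
        exact (norm_sum_le _ _).trans (Finset.sum_le_sum (fun i _ => norm_inner_le_norm _ _))
  have h3 := Finset.sum_mul_sq_le_sq_mul_sq Finset.univ
    (fun i => ‖ContinuousLinearMap.adjoint (T i) z‖) (fun i => ‖y i‖)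
  have hY : 0 ≤ ∑ i, ‖y i‖ ^ 2 := Finset.sum_nonneg (fun _ _ => by positivity)
  have h4 : (‖z‖ ^ 2) ^ 2 ≤ ‖P‖ * ‖z‖ ^ 2 * ∑ i, ‖y i‖ ^ 2 := by
    calc _ ≤ (∑ i, ‖ContinuousLinearMap.adjoint (T i) z‖ * ‖y i‖) ^ 2 := by gcongr
      _ ≤ _ := h3
      _ ≤ _ := by gcongr
  rcases (sq_nonneg ‖z‖).eq_or_lt with h0 | hpos
  · rw [← h0]; positivity
  · refine le_of_mul_le_mul_left ?_ hpos
    nlinarith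

lemma word_ineq {n : ℕ} {K : Type*} [NormedAddCommGroup K] [InnerProductSpace ℂ K] [CompleteSpace K]
    (T : Fin n → K →L[ℂ] K) (k : ℕ) : ∀ (y : (Fin k → Fin n) → K),
    ‖∑ w : Fin k → Fin n, wordProd T (List.ofFn w) (y w)‖ ^ 2 ≤
      ‖∑ i, T i * ContinuousLinearMap.adjoint (T i)‖ ^ k * ∑ w, ‖y w‖ ^ 2 := by
  induction k with
  | zero => intro y; simp [wordProd]
  | succ k ih =>
    intro y
    have e1 : ∑ w : Fin (k+1) → Fin n, wordProd T (List.ofFn w) (y w) =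
        ∑ i, T i (∑ w : Fin k → Fin n, wordProd T (List.ofFn w) (y (Fin.cons i w))) := by
      rw [← (Fin.consEquiv (fun _ => Fin n)).sum_comp, Fintype.sum_prod_type]
      refine Finset.sum_congr rfl (fun i _ => ?_)
      rw [map_sum]
      refine Finset.sum_congr rfl (fun w _ => ?_)
      simp [Fin.consEquiv, List.ofFn_succ, wordProd]
    have e2 : ∑ w : Fin (k+1) → Fin n, ‖y w‖ ^ 2 =
        ∑ i, ∑ w : Fin k → Fin n, ‖y (Fin.cons i w)‖ ^ 2 := by
      rw [← (Fin.consEquiv (fun _ => Fin n)).sum_comp, Fintype.sum_prod_type]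
      rfl
    rw [e1, e2]
    refine (row_ineq T _).trans ?_
    rw [pow_succ', mul_assoc, Finset.mul_sum (Finset.univ) _ (_ ^ k)]
    gcongr with i
    exact ih _

lemma word_norm {n : ℕ} {K : Type*} [NormedAddCommGroup K] [InnerProductSpace ℂ K] [CompleteSpace K]
    (T : Fin n → K →L[ℂ] K)
    (hT : Real.sqrt ‖∑ i, T i * ContinuousLinearMap.adjoint (T i)‖ ≤ 1 / 3)
    (k : ℕ) (c : (Fin k → Fin n) → ℂ) :
    ‖∑ w : Fin k → Fin n, c w • wordProd T (List.ofFn w)‖ ≤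
      Real.sqrt (∑ w, ‖c w‖ ^ 2) * (1 / 3) ^ k := by
  have hS : 0 ≤ ∑ w, ‖c w‖ ^ 2 := Finset.sum_nonneg (fun _ _ => by positivity)
  have hT2 : ‖∑ i, T i * ContinuousLinearMap.adjoint (T i)‖ ≤ (1 / 3) ^ 2 :=
    (Real.sqrt_le_left (by norm_num)).1 hT
  refine ContinuousLinearMap.opNorm_le_bound _ (by positivity) (fun v => ?_)
  have h := word_ineq T k (fun w => c w • v)
  have e : (∑ w : Fin k → Fin n, c w • wordProd T (List.ofFn w)) v =
      ∑ w : Fin k → Fin n, wordProd T (List.ofFn w) (c w • v) := by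
    rw [sum_apply]
    simp
  rw [e]
  apply (abs_le_of_sq_le_sq' _ (by positivity)).2
  refine h.trans ?_
  simp only [norm_smul, mul_pow, ← Finset.sum_mul]
  rw [Real.sq_sqrt hS]
  calc _ ≤ ((1 / 3 : ℝ) ^ 2) ^ k * ((∑ w, ‖c w‖ ^ 2) * ‖v‖ ^ 2) := by gcongr
    _ = _ := by rw [← pow_mul]; ring

lemma sum_smul_one_clm {ι : Type*} (s : Finset ι) (c : ι → ℂ) :
    (∑ i ∈ s, c i) • (1 : ℂ →L[ℂ] ℂ) = ∑ i ∈ s, c i • (1 : ℂ →L[ℂ] ℂ) := by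
  ext
  simp [sum_apply]

theorem stmt_14 (n : ℕ) (hn : 1 ≤ n)
    (R : Fin n → Fock n →L[ℂ] Fock n)
    (hR : ∀ (i : Fin n) (α : List (Fin n)), R i (fockBasis n α) = fockBasis n (α ++ [i]))
    (T : Fock n →L[ℂ] Fock n) (hT : ∀ i : Fin n, T * R i = R i * T)
    (a : List (Fin n) → ℂ)
    (ha : ∀ α : List (Fin n),
      a α = inner (𝕜 := ℂ) (fockBasis n α) (T (fockBasis n []))) :
    (∀ (K : Type) [NormedAddCommGroup K] [InnerProductSpace ℂ K] [CompleteSpace K],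
      ∀ T' : Fin n → K →L[ℂ] K,
        Real.sqrt ‖∑ i, T' i * ContinuousLinearMap.adjoint (T' i)‖ ≤ 1 / 3 →
        Summable (fun k : ℕ => ‖∑ w : Fin k → Fin n,
          ((‖a (List.ofFn w)‖ : ℂ)) • wordProd T' (List.ofFn w)‖) ∧
        ∑' k : ℕ, ‖∑ w : Fin k → Fin n,
          ((‖a (List.ofFn w)‖ : ℂ)) • wordProd T' (List.ofFn w)‖ ≤ ‖T‖) ∧
    (∀ r : Fin n → ℝ, (∀ i, 0 ≤ r i) → Real.sqrt (∑ i, r i ^ 2) ≤ 1 / 3 →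
      Summable (fun α : List (Fin n) => ‖a α‖ * wordProd r α) ∧
      ∑' α : List (Fin n), ‖a α‖ * wordProd r α ≤ ‖T‖) := by
  have ha' : ∀ α, a α = T (fockBasis n []) α := by
    intro α
    rw [ha, fockBasis, lp.inner_single_left]
    simp
  obtain ⟨B, hB, hxB, hk⟩ := coeff_bound n R hR T hT
  have part1 : (∀ (K : Type) [NormedAddCommGroup K] [InnerProductSpace ℂ K] [CompleteSpace K],
      ∀ T' : Fin n → K →L[ℂ] K,
        Real.sqrt ‖∑ i, T' i * ContinuousLinearMap.adjoint (T' i)‖ ≤ 1 / 3 →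
        Summable (fun k : ℕ => ‖∑ w : Fin k → Fin n,
          ((‖a (List.ofFn w)‖ : ℂ)) • wordProd T' (List.ofFn w)‖) ∧
        ∑' k : ℕ, ‖∑ w : Fin k → Fin n,
          ((‖a (List.ofFn w)‖ : ℂ)) • wordProd T' (List.ofFn w)‖ ≤ ‖T‖) := by
    intro K _ _ _ T' hT'
    set x := ‖T (fockBasis n []) []‖ with hx
    have hg : HasSum (fun k : ℕ => B * (1 / 3 : ℝ) ^ k + if k = 0 then x - B else 0)
        (B * (1 - 1 / 3 : ℝ)⁻¹ + (x - B)) :=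
      ((hasSum_geometric_of_lt_one (by norm_num) (by norm_num)).mul_left B).add
        (hasSum_ite_eq 0 (x - B))
    have hle : ∀ k : ℕ, ‖∑ w : Fin k → Fin n,
          ((‖a (List.ofFn w)‖ : ℂ)) • wordProd T' (List.ofFn w)‖ ≤
          B * (1 / 3 : ℝ) ^ k + if k = 0 then x - B else 0 := by
      intro k
      have h := word_norm T' hT' k (fun w => (‖a (List.ofFn w)‖ : ℂ))
      refine h.trans ?_
      rcases Nat.eq_zero_or_pos k with rfl | hk0
      · simp [ha', ← hx, Real.sqrt_sq (show 0 ≤ x from norm_nonneg _)]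
      · rw [if_neg hk0.ne', add_zero]
        gcongr
        refine le_trans (le_of_eq ?_) (hk k hk0)
        simp [wordsOf, ha']
    have hs := Summable.of_nonneg_of_le (fun _ => norm_nonneg _) hle hg.summable
    refine ⟨hs, (hs.tsum_le_tsum hle hg.summable).trans ?_⟩
    rw [hg.tsum_eq]
    linarith
  refine ⟨part1, ?_⟩
  intro r hr hr3
  have hw : ∀ α, 0 ≤ wordProd r α := by
    intro α
    refine List.prod_nonneg ?_
    intro b hb
    obtain ⟨i, -, rfl⟩ := List.mem_map.1 hb
    exact hr i
  let T' : Fin n → ℂ →L[ℂ] ℂ := fun i => ((r i : ℝ) : ℂ) • (1 : ℂ →L[ℂ] ℂ)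
  have hT'w : ∀ α, wordProd T' α = ((wordProd r α : ℝ) : ℂ) • (1 : ℂ →L[ℂ] ℂ) := by
    intro α
    induction α with
    | nil => simp [wordProd]
    | cons i α ih =>
      have e1 : wordProd T' (i :: α) = T' i * wordProd T' α := by simp [wordProd]
      have e2 : wordProd r (i :: α) = r i * wordProd r α := by simp [wordProd]
      rw [e1, e2, ih]
      simp only [T']
      rw [smul_mul_smul_comm, one_mul]
      push_cast; rfl
  have hP : ‖∑ i, T' i * ContinuousLinearMap.adjoint (T' i)‖ = ∑ i, r i ^ 2 := by
    have : ∑ i, T' i * ContinuousLinearMap.adjoint (T' i) =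
        ((∑ i, r i ^ 2 : ℝ) : ℂ) • (1 : ℂ →L[ℂ] ℂ) := by
      push_cast
      rw [sum_smul_one_clm]
      refine Finset.sum_congr rfl (fun i _ => ?_)
      simp only [T']
      rw [← ContinuousLinearMap.star_eq_adjoint, star_smul, star_one, smul_mul_smul_comm, one_mul]
      simp [sq]
    rw [this, norm_smul, norm_one, mul_one, Complex.norm_real, Real.norm_eq_abs,
      abs_of_nonneg (Finset.sum_nonneg (fun _ _ => by positivity))]
  obtain ⟨hs, ht⟩ := part1 ℂ T' (by rw [hP]; exact hr3)
  have e : ∀ k : ℕ, ‖∑ w : Fin k → Fin n,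
      ((‖a (List.ofFn w)‖ : ℂ)) • wordProd T' (List.ofFn w)‖ =
      ∑ w : Fin k → Fin n, ‖a (List.ofFn w)‖ * wordProd r (List.ofFn w) := by
    intro k
    have : ∑ w : Fin k → Fin n, ((‖a (List.ofFn w)‖ : ℂ)) • wordProd T' (List.ofFn w) =
        ((∑ w : Fin k → Fin n, ‖a (List.ofFn w)‖ * wordProd r (List.ofFn w) : ℝ) : ℂ) •
          (1 : ℂ →L[ℂ] ℂ) := by
      push_cast
      rw [sum_smul_one_clm]
      refine Finset.sum_congr rfl (fun w _ => ?_)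
      rw [hT'w, smul_smul]
    rw [this, norm_smul, norm_one, mul_one, Complex.norm_real, Real.norm_eq_abs,
      abs_of_nonneg (Finset.sum_nonneg (fun w _ => mul_nonneg (norm_nonneg _) (hw _)))]
  simp only [e] at hs ht
  have hsig : Summable (fun p : Σ k, Fin k → Fin n =>
      ‖a (List.ofFn p.2)‖ * wordProd r (List.ofFn p.2)) := by
    rw [summable_sigma_of_nonneg (fun p => mul_nonneg (norm_nonneg _) (hw _))]
    refine ⟨fun k => (hasSum_fintype _).summable, ?_⟩
    simpa only [tsum_fintype] using hs
  have hcomp : (fun p : Σ k, Fin k → Fin n =>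
      ‖a (List.ofFn p.2)‖ * wordProd r (List.ofFn p.2)) =
      (fun α : List (Fin n) => ‖a α‖ * wordProd r α) ∘ (List.equivSigmaTuple).symm := rfl
  refine ⟨?_, ?_⟩
  · rw [hcomp, Equiv.summable_iff] at hsig
    exact hsig
  · rw [← (List.equivSigmaTuple (α := Fin n)).symm.tsum_eq]
    refine le_trans (le_of_eq ?_) ht
    have := hsig.tsum_sigma
    simp only [tsum_fintype] at this
    exact this
end

section
/- Let m ≥ 2 be an integer, let (a_α)_{1 ≤ |α| ≤ m−1} be complex numbers, let a₀ be real, and let H := ∑_{1 ≤ |α| ≤ m−1} conj(a_α) S_α* + a₀ I + ∑_{1 ≤ |α| ≤ m−1} a_α S_α, a selfadjoint bounded operator on ℓ²(𝔽ₙ⁺). If ‖H‖ ≤ 1, then: (i) (∑_{|α|=k} |a_α|²)^{1/2} ≤ (1 − |a₀|) · cos(π/(⌊(m−1)/k⌋ + 2)) for every 1 ≤ k ≤ m−1; and (ii) |a₀| + 2 ∑_{1 ≤ |α| ≤ m−1} |a_α| r_α ≤ 1 for every tuple r = (r₁,…,rₙ) of nonnegative reals with ‖r‖₂ ≤ t_m.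 -/
open scoped BigOperators

open Finset in
lemma aux_w_nonneg (M j : ℕ) (hM : 3 ≤ M) (hj : j < M) :
    Real.cos ((2 * j + 1) * (Real.pi / M)) ≤ Real.cos (Real.pi / M) := by
  have hMp : (0 : ℝ) < M := by positivity
  have hp := Real.pi_pos
  set u := Real.pi / (M : ℝ) with hu
  have hup : 0 < u := by positivity
  have huM : (M : ℝ) * u = Real.pi := by rw [hu]; field_simp
  have hj' : (j : ℝ) + 1 ≤ M := by exact_mod_cast hj
  by_cases h : (2 * (j : ℝ) + 1) * u ≤ Real.pi
  · apply Real.cos_le_cos_of_nonneg_of_le_pi hup.le h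
    have : (0 : ℝ) ≤ j := by positivity
    nlinarith
  · push Not at h
    rw [← Real.cos_two_pi_sub]
    apply Real.cos_le_cos_of_nonneg_of_le_pi hup.le
    · linarith
    · nlinarith

/-- the points `exp (i (2j+1)π/M)` -/
noncomputable def auxZ (M j : ℕ) : ℂ :=
  Complex.exp (((2 * j + 1) * (Real.pi / M) : ℝ) * Complex.I)

lemma auxZ_ne (M j : ℕ) : auxZ M j ≠ 0 := Complex.exp_ne_zero _

lemma auxZ_conj (M j : ℕ) : (starRingEnd ℂ) (auxZ M j) = (auxZ M j)⁻¹ := by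
  unfold auxZ
  rw [← Complex.exp_conj, ← Complex.exp_neg, map_mul, Complex.conj_ofReal, Complex.conj_I, mul_neg]

lemma auxZ_cos (M j : ℕ) : ((Real.cos ((2 * j + 1) * (Real.pi / M)) : ℝ) : ℂ)
    = (auxZ M j + (auxZ M j)⁻¹) / 2 := by
  unfold auxZ
  rw [Complex.ofReal_cos, Complex.cos, ← Complex.exp_neg]
  simp

lemma auxZ_sum (M : ℕ) (hM : 3 ≤ M) (s : ℤ) (hs : |s| < M) :
    ∑ j ∈ Finset.range M, (auxZ M j) ^ s = if s = 0 then (M : ℂ) else 0 := by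
  split_ifs with h0
  · subst h0; simp
  · have hM0 : M ≠ 0 := by omega
    have hω := Complex.isPrimitiveRoot_exp M hM0
    set ω := Complex.exp (2 * Real.pi * Complex.I / M) with hωd
    have hz : ∀ j, auxZ M j ^ s = auxZ M 0 ^ s * (ω ^ s) ^ j := by
      intro j
      have : auxZ M j = auxZ M 0 * ω ^ j := by
        unfold auxZ
        rw [hωd, ← Complex.exp_nat_mul, ← Complex.exp_add]
        congr 1
        push_cast
        ring
      rw [this, mul_zpow, ← zpow_natCast, ← zpow_natCast, ← zpow_mul, ← zpow_mul, mul_comm s]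
    rw [Finset.sum_congr rfl (fun j _ => hz j), ← Finset.mul_sum]
    have h1 : ω ^ s ≠ 1 := by
      intro h
      rw [hω.zpow_eq_one_iff_dvd] at h
      exact h0 (Int.eq_zero_of_abs_lt_dvd h hs)
    have h2 : (ω ^ s) ^ M = 1 := by
      rw [← zpow_natCast, ← zpow_mul, mul_comm, zpow_mul, zpow_natCast, hω.pow_eq_one, one_zpow]
    have := geom_sum_mul (ω ^ s) M
    rw [h2, sub_self] at this
    rcases mul_eq_zero.mp this with h | h
    · rw [h, mul_zero]
    · exact absurd (sub_eq_zero.mp h) h1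

lemma aux_kernel (M : ℕ) (hM : 3 ≤ M) (s : ℤ) (hs : |s| < M - 1) :
    ∑ j ∈ Finset.range M, ((Real.cos (Real.pi / M) - Real.cos ((2 * j + 1) * (Real.pi / M)) : ℝ) : ℂ)
      * (auxZ M j) ^ s
    = (M : ℂ) * ((if s = 0 then (Real.cos (Real.pi / M) : ℂ) else 0)
      - (if s = 1 then 1 / 2 else 0) - (if s = -1 then 1 / 2 else 0)) := by
  have h : ∀ j : ℕ, ((Real.cos (Real.pi / M) - Real.cos ((2 * j + 1) * (Real.pi / M)) : ℝ) : ℂ)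
      * (auxZ M j) ^ s = (Real.cos (Real.pi / M) : ℂ) * (auxZ M j) ^ s
        - (auxZ M j) ^ (s + 1) / 2 - (auxZ M j) ^ (s - 1) / 2 := by
    intro j
    rw [Complex.ofReal_sub, auxZ_cos, zpow_add_one₀ (auxZ_ne M j), zpow_sub_one₀ (auxZ_ne M j)]
    ring
  simp_rw [h]
  rw [Finset.sum_sub_distrib, Finset.sum_sub_distrib, ← Finset.mul_sum, ← Finset.sum_div,
    ← Finset.sum_div, auxZ_sum M hM s (by omega),
    auxZ_sum M hM (s + 1) (by rw [abs_lt] at *; omega),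
    auxZ_sum M hM (s - 1) (by rw [abs_lt] at *; omega)]
  have e1 : s + 1 = 0 ↔ s = -1 := by omega
  have e2 : s - 1 = 0 ↔ s = 1 := by omega
  simp only [e1, e2]
  split_ifs <;> first | omega | ring

lemma aux_sum (L : ℕ) (A B : ℂ) :
    ∑ p ∈ Finset.range (L + 1), ∑ q ∈ Finset.range (L + 1),
      ((if (p : ℤ) - q = 0 then A else 0) - (if (p : ℤ) - q = 1 then B else 0)
        - (if (p : ℤ) - q = -1 then B else 0)) = (L + 1) * A - 2 * L * B := by
  have e0 : ∀ p q : ℕ, ((p : ℤ) - q = 0) ↔ p = q := by intros; omega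
  have e1 : ∀ p q : ℕ, ((p : ℤ) - q = 1) ↔ q + 1 = p := by intros; omega
  have e2 : ∀ p q : ℕ, ((p : ℤ) - q = -1) ↔ p + 1 = q := by intros; omega
  simp only [e0, e1, e2, Finset.sum_sub_distrib]
  have h2 : ∑ p ∈ Finset.range (L + 1), ∑ q ∈ Finset.range (L + 1),
      (if p + 1 = q then B else 0) = L * B := by
    simp only [Finset.sum_ite_eq]
    rw [Finset.sum_range_succ]
    rw [Finset.sum_congr rfl (g := fun _ => B)]
    · simp
    · intro x hx
      simp at hx ⊢
      omega
  have h1 : ∑ p ∈ Finset.range (L + 1), ∑ q ∈ Finset.range (L + 1),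
      (if q + 1 = p then B else 0) = L * B := by
    rw [Finset.sum_comm]; exact h2
  rw [h1, h2]
  simp only [Finset.sum_ite_eq]
  rw [Finset.sum_congr rfl (g := fun _ => A)]
  · simp; ring
  · intro x hx
    rw [if_pos hx]

lemma aux_scalar (M : ℕ) (hM : 3 ≤ M) (G : ℕ → ℕ → ℂ) (c β : ℝ)
    (h0 : ∀ p, G p p = c) (h1 : ∀ p, G (p + 1) p = β) (h1' : ∀ p, G p (p + 1) = β)
    (h2 : ∀ p q : ℕ, (M : ℤ) - 1 ≤ |(p : ℤ) - q| → G p q = 0)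
    (hpos : ∀ (L : ℕ) (v : ℕ → ℂ), 0 ≤ (∑ p ∈ Finset.range L, ∑ q ∈ Finset.range L,
      (starRingEnd ℂ) (v q) * v p * G q p).re) :
    β ≤ c * Real.cos (Real.pi / M) := by
  have key : ∀ L : ℕ, L * β ≤ (L + 1) * (c * Real.cos (Real.pi / M)) := by
    intro L
    have hs : 0 ≤ ∑ j ∈ Finset.range M,
        (Real.cos (Real.pi / M) - Real.cos ((2 * j + 1) * (Real.pi / M))) *
        (∑ p ∈ Finset.range (L + 1), ∑ q ∈ Finset.range (L + 1),
      (starRingEnd ℂ) (auxZ M j ^ q) * auxZ M j ^ p * G q p).re := by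
      apply Finset.sum_nonneg
      intro j hj
      apply mul_nonneg
      · have := aux_w_nonneg M j hM (Finset.mem_range.mp hj)
        linarith
      · exact hpos (L + 1) (fun p => auxZ M j ^ p)
    have he : ((∑ j ∈ Finset.range M,
        (((Real.cos (Real.pi / M) - Real.cos ((2 * j + 1) * (Real.pi / M)) : ℝ) : ℂ)) *
        (∑ p ∈ Finset.range (L + 1), ∑ q ∈ Finset.range (L + 1),
      (starRingEnd ℂ) (auxZ M j ^ q) * auxZ M j ^ p * G q p))) =
        (M : ℂ) * ((L + 1) * (c * Real.cos (Real.pi / M)) - 2 * L * (β / 2)) := by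
      rw [← aux_sum]
      simp_rw [Finset.mul_sum]
      rw [Finset.sum_comm]
      apply Finset.sum_congr rfl
      intro p _
      rw [Finset.sum_comm]
      apply Finset.sum_congr rfl
      intro q _
      have : ∀ j : ℕ, (((Real.cos (Real.pi / M) - Real.cos ((2 * j + 1) * (Real.pi / M)) : ℝ) : ℂ)) *
          ((starRingEnd ℂ) (auxZ M j ^ q) * auxZ M j ^ p * G q p) =
          (((Real.cos (Real.pi / M) - Real.cos ((2 * j + 1) * (Real.pi / M)) : ℝ) : ℂ)) *
          auxZ M j ^ ((p : ℤ) - q) * G q p := by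
        intro j
        rw [map_pow, auxZ_conj, zpow_sub₀ (auxZ_ne M j), zpow_natCast, zpow_natCast, inv_pow]
        ring
      simp_rw [this]
      rw [← Finset.sum_mul]
      by_cases hpq : |(p : ℤ) - q| < M - 1
      · rw [aux_kernel M hM _ hpq]
        rcases lt_trichotomy p q with h | h | h
        · by_cases h' : q = p + 1
          · subst h'
            rw [h1]
            simp
            ring
          · have a1 : ¬ ((p : ℤ) - q = 0) := by omega
            have a2 : ¬ ((p : ℤ) - q = 1) := by omega
            have a3 : ¬ ((p : ℤ) - q = -1) := by omega
            simp only [a1, a2, a3, if_false]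
            ring
        · subst h
          rw [h0]; simp; ring
        · by_cases h' : p = q + 1
          · subst h'
            rw [h1']
            simp
            ring
          · have a1 : ¬ ((p : ℤ) - q = 0) := by omega
            have a2 : ¬ ((p : ℤ) - q = 1) := by omega
            have a3 : ¬ ((p : ℤ) - q = -1) := by omega
            simp only [a1, a2, a3, if_false]
            ring
      · rw [h2 q p (by rw [abs_sub_comm]; omega)]
        have a1 : ¬ ((p : ℤ) - q = 0) := by intro h; rw [h] at hpq; simp at hpq; omega
        have a2 : ¬ ((p : ℤ) - q = 1) := by intro h; rw [h] at hpq; simp at hpq; omega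
        have a3 : ¬ ((p : ℤ) - q = -1) := by intro h; rw [h] at hpq; simp at hpq; omega
        simp only [a1, a2, a3, if_false]
        ring
    have hr := congrArg Complex.re he
    rw [Complex.re_sum] at hr
    simp_rw [Complex.re_ofReal_mul] at hr
    rw [hr] at hs
    have hc : ((M : ℂ) * ((L + 1) * (c * Real.cos (Real.pi / M)) - 2 * L * (β / 2))) =
      (((M : ℝ) * ((L + 1) * (c * Real.cos (Real.pi / M)) - 2 * L * (β / 2)) : ℝ) : ℂ) := by
      push_cast; ring
    rw [hc, Complex.ofReal_re] at hs
    have hMp : (0 : ℝ) < M := by positivity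
    have := nonneg_of_mul_nonneg_right hs hMp
    linarith
  by_contra hcon
  push Not at hcon
  obtain ⟨L, hL⟩ := exists_nat_gt ((c * Real.cos (Real.pi / M)) / (β - c * Real.cos (Real.pi / M)))
  rw [div_lt_iff₀ (by linarith)] at hL
  have := key L
  linarith

/-- homogeneous vectors of degree `l` -/
noncomputable def auxE (n l : ℕ) : Submodule ℂ (Fock n) :=
  Submodule.span ℂ {x | ∃ α : List (Fin n), α.length = l ∧ x = fockBasis n α}

lemma aux_basis_inner (n : ℕ) (α γ : List (Fin n)) :
    inner ℂ (fockBasis n α) (fockBasis n γ) = if α = γ then (1 : ℂ) else 0 := by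
  unfold fockBasis
  rw [lp.inner_single_left, lp.single_apply]
  by_cases h : α = γ
  · subst h; simp
  · simp [h]

lemma auxE_ortho (n l l' : ℕ) (h : l ≠ l') (x y : Fock n) (hx : x ∈ auxE n l) (hy : y ∈ auxE n l') :
    inner ℂ x y = 0 := by
  have : auxE n l ⟂ auxE n l' := by
    unfold auxE
    rw [Submodule.isOrtho_span]
    rintro _ ⟨α, hα, rfl⟩ _ ⟨γ, hγ, rfl⟩
    rw [aux_basis_inner, if_neg]
    rintro rfl
    omega
  exact this.inner_eq hx hy

lemma aux_word_basis (n : ℕ) (S : Fin n → Fock n →L[ℂ] Fock n)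
    (hS : ∀ (i : Fin n) (α : List (Fin n)), S i (fockBasis n α) = fockBasis n (i :: α))
    (α γ : List (Fin n)) : wordProd S α (fockBasis n γ) = fockBasis n (α ++ γ) := by
  induction α with
  | nil => simp [wordProd]
  | cons i α ih =>
    have : wordProd S (i :: α) = S i * wordProd S α := by simp [wordProd]
    rw [this, mul_apply_eq_comp, ih, hS]; rfl

lemma aux_word_mem (n : ℕ) (S : Fin n → Fock n →L[ℂ] Fock n)
    (hS : ∀ (i : Fin n) (α : List (Fin n)), S i (fockBasis n α) = fockBasis n (i :: α))
    (α : List (Fin n)) (l : ℕ) (x : Fock n) (hx : x ∈ auxE n l) :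
    wordProd S α x ∈ auxE n (α.length + l) := by
  unfold auxE at hx
  induction hx using Submodule.span_induction with
  | mem x h =>
    obtain ⟨γ, hγ, rfl⟩ := h
    rw [aux_word_basis n S hS]
    exact Submodule.subset_span ⟨_, by simp [hγ], rfl⟩
  | zero => simp
  | add x y _ _ h1 h2 => rw [map_add]; exact add_mem h1 h2
  | smul c x _ h => rw [map_smul]; exact Submodule.smul_mem _ _ h

lemma aux_word_inner (n : ℕ) (S : Fin n → Fock n →L[ℂ] Fock n)
    (hS : ∀ (i : Fin n) (α : List (Fin n)), S i (fockBasis n α) = fockBasis n (i :: α))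
    (α α' : List (Fin n)) (hl : α.length = α'.length) (l : ℕ) (x y : Fock n)
    (hx : x ∈ auxE n l) (hy : y ∈ auxE n l) :
    inner ℂ (wordProd S α x) (wordProd S α' y) = if α = α' then inner ℂ x y else 0 := by
  unfold auxE at hx hy
  induction hx using Submodule.span_induction with
  | mem x h =>
    obtain ⟨γ, hγ, rfl⟩ := h
    induction hy using Submodule.span_induction with
    | mem y h =>
      obtain ⟨γ', hγ', rfl⟩ := h
      rw [aux_word_basis n S hS, aux_word_basis n S hS, aux_basis_inner, aux_basis_inner]
      by_cases h : α = α'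
      · subst h; simp
      · rw [if_neg h, if_neg]
        intro h'
        exact h (List.append_inj_left h' hl)
    | zero => simp
    | add x y _ _ h1 h2 =>
      rw [map_add, inner_add_right, inner_add_right, h1, h2]; split_ifs <;> simp
    | smul c x _ h => rw [map_smul, inner_smul_right, inner_smul_right, h]; split_ifs <;> simp
  | zero => simp
  | add x y _ _ h1 h2 =>
    rw [map_add, inner_add_left, inner_add_left, h1, h2]; split_ifs <;> simp
  | smul c x _ h => rw [map_smul, inner_smul_left, inner_smul_left, h]; split_ifs <;> simp

/-- the homogeneous part of degree `k` -/
noncomputable def auxT {n : ℕ} (S : Fin n → Fock n →L[ℂ] Fock n) (a : List (Fin n) → ℂ) (k : ℕ) :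
    Fock n →L[ℂ] Fock n :=
  ∑ w : Fin k → Fin n, a (List.ofFn w) • wordProd S (List.ofFn w)

lemma auxT_mem (n : ℕ) (S : Fin n → Fock n →L[ℂ] Fock n)
    (hS : ∀ (i : Fin n) (α : List (Fin n)), S i (fockBasis n α) = fockBasis n (i :: α))
    (a : List (Fin n) → ℂ) (k l : ℕ) (x : Fock n) (hx : x ∈ auxE n l) :
    auxT S a k x ∈ auxE n (k + l) := by
  unfold auxT
  rw [sum_apply]
  apply Submodule.sum_mem
  intro w _
  rw [smul_apply]
  apply Submodule.smul_mem
  have := aux_word_mem n S hS (List.ofFn w) l x hx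
  rwa [List.length_ofFn] at this

lemma auxT_inner (n : ℕ) (S : Fin n → Fock n →L[ℂ] Fock n)
    (hS : ∀ (i : Fin n) (α : List (Fin n)), S i (fockBasis n α) = fockBasis n (i :: α))
    (a : List (Fin n) → ℂ) (k l : ℕ) (x : Fock n) (hx : x ∈ auxE n l) :
    inner ℂ (auxT S a k x) (auxT S a k x) =
      ((∑ w : Fin k → Fin n, ‖a (List.ofFn w)‖ ^ 2 : ℝ) : ℂ) * inner ℂ x x := by
  unfold auxT
  rw [sum_apply, sum_inner, Complex.ofReal_sum, Finset.sum_mul]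
  apply Finset.sum_congr rfl
  intro w _
  rw [inner_sum, Finset.sum_eq_single w]
  · rw [smul_apply, inner_smul_left, inner_smul_right,
      aux_word_inner n S hS _ _ rfl l x x hx hx, if_pos rfl, ← mul_assoc, Complex.conj_mul']
    push_cast
    rfl
  · intro w' _ hne
    rw [smul_apply, smul_apply, inner_smul_left,
      inner_smul_right, aux_word_inner n S hS _ _ (by simp) l x x hx hx, if_neg]
    · simp
    · intro h
      exact hne (List.ofFn_injective h).symm
  · simp

lemma aux_part1 (n : ℕ) (m : ℕ) (hm : 2 ≤ m)
    (a : List (Fin n) → ℂ) (a0 : ℝ)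
    (S : Fin n → Fock n →L[ℂ] Fock n)
    (hS : ∀ (i : Fin n) (α : List (Fin n)), S i (fockBasis n α) = fockBasis n (i :: α))
    (H : Fock n →L[ℂ] Fock n)
    (hH : ∀ x y, inner ℂ y (H x) = (∑ l ∈ Finset.Icc 1 (m - 1), inner ℂ (auxT S a l y) x)
      + (a0 : ℂ) * inner ℂ y x + ∑ l ∈ Finset.Icc 1 (m - 1), inner ℂ y (auxT S a l x))
    (hnorm : ‖H‖ ≤ 1) (k : ℕ) (hk : 1 ≤ k) (hkm : k ≤ m - 1) :
      Real.sqrt (∑ w : Fin k → Fin n, ‖a (List.ofFn w)‖ ^ 2) ≤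
        (1 - |a0|) * Real.cos (Real.pi / (((m - 1) / k + 2 : ℕ) : ℝ)) := by
  obtain ⟨ε, hε, hεa⟩ : ∃ ε : ℝ, ε ^ 2 = 1 ∧ ε * a0 = |a0| := by
    rcases le_total 0 a0 with h | h
    · exact ⟨1, by norm_num, by rw [abs_of_nonneg h, one_mul]⟩
    · exact ⟨-1, by norm_num, by rw [abs_of_nonpos h]; ring⟩
  have hεabs : |ε| = 1 := by
    rw [← sq_abs] at hε
    nlinarith [abs_nonneg ε]
  have hN : 1 ≤ (m - 1) / k := (Nat.one_le_div_iff (by omega)).mpr hkm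
  have hNlt : m - 1 < k * ((m - 1) / k + 1) := Nat.lt_mul_div_succ _ (by omega)
  set N := (m - 1) / k with hNdef
  -- basic vector
  set e0 : Fock n := fockBasis n [] with he0
  have he0m : e0 ∈ auxE n 0 := Submodule.subset_span ⟨[], rfl, rfl⟩
  have he0i : inner ℂ e0 e0 = (1 : ℂ) := by rw [he0, aux_basis_inner, if_pos rfl]
  -- positivity
  have hposv : ∀ x : Fock n, 0 ≤ (inner ℂ x x - (ε : ℂ) * inner ℂ x (H x) : ℂ).re := by
    intro x
    rw [Complex.sub_re, Complex.re_ofReal_mul]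
    have h1 : (inner ℂ x x : ℂ).re = ‖x‖ ^ 2 := inner_self_eq_norm_sq (𝕜 := ℂ) x
    have h2 : |(inner ℂ x (H x) : ℂ).re| ≤ ‖x‖ ^ 2 := by
      calc |(inner ℂ x (H x) : ℂ).re| ≤ ‖(inner ℂ x (H x) : ℂ)‖ := Complex.abs_re_le_norm _
        _ ≤ ‖x‖ * ‖H x‖ := norm_inner_le_norm _ _
        _ ≤ ‖x‖ * (1 * ‖x‖) := by
            gcongr
            exact H.le_of_opNorm_le hnorm x
        _ = ‖x‖ ^ 2 := by ring
    have h3 : ε * (inner ℂ x (H x) : ℂ).re ≤ |(inner ℂ x (H x) : ℂ).re| := by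
      calc _ ≤ |ε * (inner ℂ x (H x) : ℂ).re| := le_abs_self _
        _ = _ := by rw [abs_mul, hεabs, one_mul]
    linarith
  have hdiag : ∀ l (x : Fock n), x ∈ auxE n l → inner ℂ x (H x) = (a0 : ℂ) * inner ℂ x x := by
    intro l x hx
    rw [hH, Finset.sum_eq_zero, Finset.sum_eq_zero]
    · ring
    · intro j hj
      rw [Finset.mem_Icc] at hj
      exact auxE_ortho n _ _ (by omega) _ _ hx (auxT_mem n S hS a j l x hx)
    · intro j hj
      rw [Finset.mem_Icc] at hj
      exact auxE_ortho n _ _ (by omega) _ _ (auxT_mem n S hS a j l x hx) hx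
  have hc : 0 ≤ 1 - |a0| := by
    have := hposv e0
    rw [hdiag 0 e0 he0m, he0i, ← hεa] at *
    simpa using this
  set β := Real.sqrt (∑ w : Fin k → Fin n, ‖a (List.ofFn w)‖ ^ 2) with hβ
  have hβ2 : β ^ 2 = ∑ w : Fin k → Fin n, ‖a (List.ofFn w)‖ ^ 2 :=
    Real.sq_sqrt (Finset.sum_nonneg fun _ _ => by positivity)
  rcases (Real.sqrt_nonneg (∑ w : Fin k → Fin n, ‖a (List.ofFn w)‖ ^ 2)).eq_or_lt with hb | hb
  · rw [hβ, ← hb]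
    apply mul_nonneg hc
    apply Real.cos_nonneg_of_neg_pi_div_two_le_of_le
    · have : 0 ≤ Real.pi / ((N + 2 : ℕ) : ℝ) := by positivity
      linarith [Real.pi_pos]
    · apply div_le_div_of_nonneg_left Real.pi_pos.le (by norm_num)
      push_cast
      linarith [(Nat.cast_nonneg N : (0 : ℝ) ≤ N)]
  rw [← hβ] at hb
  have hbC : (β : ℂ) ≠ 0 := by exact_mod_cast hb.ne'
  have hεC : (ε : ℂ) ^ 2 = 1 := by exact_mod_cast hε
  -- the chain
  let V : Fock n → Fock n := fun x => ((-ε / β : ℝ) : ℂ) • auxT S a k x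
  let ξ : ℕ → Fock n := fun p => V^[p] e0
  have hξs : ∀ p, ξ (p + 1) = ((-ε / β : ℝ) : ℂ) • auxT S a k (ξ p) := fun p =>
    Function.iterate_succ_apply' V p e0
  have hTξ : ∀ p, auxT S a k (ξ p) = ((-ε * β : ℝ) : ℂ) • ξ (p + 1) := by
    intro p
    rw [hξs, smul_smul]
    have : ((-ε * β : ℝ) : ℂ) * ((-ε / β : ℝ) : ℂ) = 1 := by
      push_cast
      field_simp
      linear_combination hεC
    rw [this, one_smul]
  have hξm : ∀ p, ξ p ∈ auxE n (k * p) := by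
    intro p
    induction p with
    | zero => exact he0m
    | succ p ih =>
      rw [hξs]
      apply Submodule.smul_mem
      have := auxT_mem n S hS a k _ _ ih
      rwa [show k * (p + 1) = k + k * p by ring]
  have hξn : ∀ p, inner ℂ (ξ p) (ξ p) = (1 : ℂ) := by
    intro p
    induction p with
    | zero => exact he0i
    | succ p ih =>
      rw [hξs, inner_smul_left, inner_smul_right, auxT_inner n S hS a k _ _ (hξm p), ih, ← hβ2,
        Complex.conj_ofReal]
      push_cast
      field_simp
      linear_combination hεC
  have hξo : ∀ p q, p ≠ q → inner ℂ (ξ p) (ξ q) = (0 : ℂ) := by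
    intro p q h
    apply auxE_ortho n _ _ _ _ _ (hξm p) (hξm q)
    intro h'
    exact h (Nat.eq_of_mul_eq_mul_left (by omega) h')
  have hup : ∀ l p q, 1 ≤ l → k * q ≠ l + k * p → inner ℂ (ξ q) (auxT S a l (ξ p)) = (0 : ℂ) := by
    intro l p q hl h
    exact auxE_ortho n _ _ h _ _ (hξm q) (auxT_mem n S hS a l _ _ (hξm p))
  have hdn : ∀ l p q, 1 ≤ l → k * q ≠ l + k * p → inner ℂ (auxT S a l (ξ p)) (ξ q) = (0 : ℂ) := by
    intro l p q hl h
    exact auxE_ortho n _ _ h.symm _ _ (auxT_mem n S hS a l _ _ (hξm p)) (hξm q)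
  apply aux_scalar (N + 2) (by omega)
    (fun q p => inner ℂ (ξ q) (ξ p) - (ε : ℂ) * inner ℂ (ξ q) (H (ξ p)))
  · intro p
    rw [hdiag _ _ (hξm p), hξn, ← hεa]
    push_cast; ring
  · intro p
    rw [hξo _ _ (by omega), hH, hξo _ _ (by omega), Finset.sum_eq_zero, Finset.sum_eq_single k,
      hTξ, inner_smul_right, hξn]
    · push_cast
      linear_combination (β : ℂ) * hεC
    · intro l hl hlk
      rw [Finset.mem_Icc] at hl
      apply hup _ _ _ hl.1
      rw [mul_add]; omega
    · intro h
      exact absurd (Finset.mem_Icc.mpr ⟨hk, hkm⟩) h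
    · intro l hl
      rw [Finset.mem_Icc] at hl
      apply hdn _ _ _ hl.1
      rw [mul_add]; omega
  · intro p
    rw [hξo _ _ (by omega), hH, hξo _ _ (by omega), Finset.sum_eq_single k, Finset.sum_eq_zero,
      hTξ, inner_smul_left, hξn]
    · rw [Complex.conj_ofReal]
      push_cast
      linear_combination (β : ℂ) * hεC
    · intro l hl
      rw [Finset.mem_Icc] at hl
      apply hup _ _ _ hl.1
      rw [mul_add]; omega
    · intro l hl hlk
      rw [Finset.mem_Icc] at hl
      apply hdn _ _ _ hl.1
      rw [mul_add]; omega
    · intro h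
      exact absurd (Finset.mem_Icc.mpr ⟨hk, hkm⟩) h
  · intro q p hqp
    have hfar : ∀ l p q : ℕ, l ∈ Finset.Icc 1 (m - 1) → ((N + 2 : ℕ) : ℤ) - 1 ≤ |(q : ℤ) - p| →
        k * q ≠ l + k * p := by
      intro l p q hl h h'
      rw [Finset.mem_Icc] at hl
      have hlt : p < q := by
        by_contra hh
        have := Nat.mul_le_mul_left k (not_lt.mp hh)
        omega
      rw [abs_of_pos (by omega)] at h
      have h3 : p + (N + 1) ≤ q := by omega
      have := Nat.mul_le_mul_left k h3
      rw [mul_add] at this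
      omega
    have hne : q ≠ p := by
      rintro rfl
      simp at hqp
      omega
    rw [hξo _ _ hne, hH, hξo _ _ hne, Finset.sum_eq_zero, Finset.sum_eq_zero]
    · simp
    · intro l hl
      exact hup _ _ _ (Finset.mem_Icc.mp hl).1 (hfar l p q hl hqp)
    · intro l hl
      exact hdn _ _ _ (Finset.mem_Icc.mp hl).1 (hfar l q p hl (by rwa [abs_sub_comm]))
  · intro L v
    have := hposv (∑ p ∈ Finset.range L, v p • ξ p)
    convert this using 2
    rw [map_sum, inner_sum, inner_sum, Finset.mul_sum, ← Finset.sum_sub_distrib]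
    apply Finset.sum_congr rfl
    intro p _
    rw [sum_inner, sum_inner, Finset.mul_sum, ← Finset.sum_sub_distrib]
    apply Finset.sum_congr rfl
    intro q _
    rw [map_smul, inner_smul_left, inner_smul_left, inner_smul_right, inner_smul_right]
    ring

lemma aux_wordsum (n k : ℕ) (r : Fin n → ℝ) :
    ∑ w : Fin k → Fin n, (wordProd r (List.ofFn w)) ^ 2 = (∑ i, r i ^ 2) ^ k := by
  rw [Fintype.sum_pow]
  apply Finset.sum_congr rfl
  intro w _
  rw [wordProd, List.map_ofFn, List.prod_ofFn, ← Finset.prod_pow]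
  rfl

theorem stmt_15 (n : ℕ) (hn : 1 ≤ n) (m : ℕ) (hm : 2 ≤ m)
    (a : List (Fin n) → ℂ) (a0 : ℝ)
    (S : Fin n → Fock n →L[ℂ] Fock n)
    (hS : ∀ (i : Fin n) (α : List (Fin n)), S i (fockBasis n α) = fockBasis n (i :: α))
    (H : Fock n →L[ℂ] Fock n)
    (hH : H = (∑ k ∈ Finset.Icc 1 (m - 1), ∑ w : Fin k → Fin n,
        ((starRingEnd ℂ) (a (List.ofFn w))) •
          ContinuousLinearMap.adjoint (wordProd S (List.ofFn w)))
      + (a0 : ℂ) • 1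
      + ∑ k ∈ Finset.Icc 1 (m - 1), ∑ w : Fin k → Fin n,
          a (List.ofFn w) • wordProd S (List.ofFn w))
    (hsa : IsSelfAdjoint H) (hnorm : ‖H‖ ≤ 1)
    (t : ℝ) (htm : t ∈ Set.Ioc (0 : ℝ) 1) (hts : fm m t = 1 / 2) :
    (∀ k : ℕ, 1 ≤ k → k ≤ m - 1 →
      Real.sqrt (∑ w : Fin k → Fin n, ‖a (List.ofFn w)‖ ^ 2) ≤
        (1 - |a0|) * Real.cos (Real.pi / (((m - 1) / k + 2 : ℕ) : ℝ))) ∧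
    (∀ r : Fin n → ℝ, (∀ i, 0 ≤ r i) → Real.sqrt (∑ i, r i ^ 2) ≤ t →
      |a0| + 2 * ∑ k ∈ Finset.Icc 1 (m - 1), ∑ w : Fin k → Fin n,
        ‖a (List.ofFn w)‖ * wordProd r (List.ofFn w) ≤ 1) := by
  have hH' : ∀ x y, inner ℂ y (H x) = (∑ l ∈ Finset.Icc 1 (m - 1), inner ℂ (auxT S a l y) x)
      + (a0 : ℂ) * inner ℂ y x + ∑ l ∈ Finset.Icc 1 (m - 1), inner ℂ y (auxT S a l x) := by
    intro x y
    rw [hH]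
    simp only [add_apply, sum_apply,
      smul_apply, inner_add_right, inner_sum, auxT, inner_smul_right,
      sum_inner, inner_smul_left, ContinuousLinearMap.adjoint_inner_right,
      one_apply_eq_self]
  have h1 := aux_part1 n m hm a a0 S hS H hH' hnorm
  refine ⟨h1, ?_⟩
  intro r hr hrt
  have hb : ∑ k ∈ Finset.Icc 1 (m - 1), ∑ w : Fin k → Fin n,
        ‖a (List.ofFn w)‖ * wordProd r (List.ofFn w) ≤ (1 - |a0|) * fm m t := by
    unfold fm
    rw [Finset.mul_sum]
    apply Finset.sum_le_sum
    intro k hk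
    rw [Finset.mem_Icc] at hk
    have hk1 := h1 k hk.1 hk.2
    calc _ ≤ Real.sqrt (∑ w : Fin k → Fin n, ‖a (List.ofFn w)‖ ^ 2) *
          Real.sqrt (∑ w : Fin k → Fin n, (wordProd r (List.ofFn w)) ^ 2) :=
          Real.sum_mul_le_sqrt_mul_sqrt _ _ _
      _ = Real.sqrt (∑ w : Fin k → Fin n, ‖a (List.ofFn w)‖ ^ 2) *
          (Real.sqrt (∑ i, r i ^ 2)) ^ k := by
          rw [aux_wordsum, Real.sqrt_eq_rpow, Real.sqrt_eq_rpow, Real.sqrt_eq_rpow,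
            ← Real.rpow_natCast, ← Real.rpow_natCast, ← Real.rpow_mul, ← Real.rpow_mul,
            mul_comm (k : ℝ)] <;> positivity
      _ ≤ ((1 - |a0|) * Real.cos (Real.pi / (((m - 1) / k + 2 : ℕ) : ℝ))) * t ^ k := by
          apply mul_le_mul hk1 (pow_le_pow_left₀ (Real.sqrt_nonneg _) hrt k) (by positivity)
          exact le_trans (Real.sqrt_nonneg _) hk1
      _ = _ := by ring
  rw [hts] at hb
  linarith
end

section
/- Let m ≥ 3 be an integer, let (a_α)_{1 ≤ |α| ≤ m−1} be complex numbers, let a₀ be real, and let H := ∑_{1 ≤ |α| ≤ m−1} conj(a_α) S_α* + a₀ I + ∑_{1 ≤ |α| ≤ m−1} a_α S_α, a selfadjoint bounded operator on ℓ²(𝔽ₙ⁺). If ‖H‖ ≤ 1, then ∑_{k=0}^{m−1} (∑_{|α|=k} |a_α| r_α) ≤ 1 for every tuple r = (r₁,…,rₙ) of nonnegative reals with ‖r‖₂ ≤ γ_m, where γ_m ∈ (0,1) is the unique solution of f_m(t) = 1. -/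
open scoped BigOperators

open Complex in
/-- Equally spaced nodes kill the nonzero frequencies. -/
theorem node_sum (M : ℕ) (l : ℤ) (hM : 0 < M) (hl : l ≠ 0) (hlM : |l| < M) :
    ∑ s ∈ Finset.range M, Complex.exp (((l * (Real.pi * (2 * s + 1) / M) : ℝ) : ℂ) * I) = 0 := by
  have hM' : (M : ℂ) ≠ 0 := by exact_mod_cast hM.ne'
  set q : ℂ := Complex.exp (2 * Real.pi * I * l / M) with hq
  have h1 : ∀ s : ℕ, Complex.exp (((l * (Real.pi * (2 * s + 1) / M) : ℝ) : ℂ) * I)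
      = Complex.exp (l * Real.pi * I / M) * q ^ s := by
    intro s
    rw [hq, ← Complex.exp_nat_mul, ← Complex.exp_add]
    congr 1
    push_cast
    field_simp
    ring
  simp_rw [h1]
  rw [← Finset.mul_sum]
  have hqM : q ^ M = 1 := by
    rw [hq, ← Complex.exp_nat_mul, Complex.exp_eq_one_iff]
    exact ⟨l, by field_simp⟩
  have hq1 : q ≠ 1 := by
    intro h
    rw [hq, Complex.exp_eq_one_iff] at h
    obtain ⟨t, ht⟩ := h
    have h2 : (2 * Real.pi * I : ℂ) ≠ 0 := Complex.two_pi_I_ne_zero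
    have h3 : (l : ℂ) = t * M := by
      field_simp at ht
      have h4 : (2 * Real.pi * I : ℂ) * l = (2 * Real.pi * I : ℂ) * (t * M) := by
        linear_combination (2 * Real.pi * I : ℂ) * ht
      exact mul_left_cancel₀ h2 h4
    have h5 : l = t * M := by exact_mod_cast h3
    have h6 : t ≠ 0 := by rintro rfl; simp at h5; exact hl h5
    have h7 : 1 ≤ |t| := Int.one_le_abs h6
    rw [h5, abs_mul] at hlM
    simp only [Nat.abs_cast] at hlM
    nlinarith
  rw [geom_sum_eq hq1, hqM]
  simp

/-- cos of the odd nodes is bounded by the cos of the first one. -/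
theorem cos_node_le (M s : ℕ) (hM : 0 < M) (hs : s < M) :
    Real.cos (Real.pi * (2 * s + 1) / M) ≤ Real.cos (Real.pi / M) := by
  have hMr : (0 : ℝ) < M := by exact_mod_cast hM
  have hp := Real.pi_pos
  have hsM : (s : ℝ) + 1 ≤ M := by exact_mod_cast hs
  have hs0 : (0 : ℝ) ≤ s := by positivity
  by_cases h : Real.pi * (2 * s + 1) / M ≤ Real.pi
  · apply Real.cos_le_cos_of_nonneg_of_le_pi (by positivity) h
    gcongr
    nlinarith
  · rw [← Real.cos_two_pi_sub]
    push Not at h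
    apply Real.cos_le_cos_of_nonneg_of_le_pi (by positivity) (by linarith)
    rw [le_sub_iff_add_le, ← add_div, div_le_iff₀ hMr]
    nlinarith

open Complex in
/-- Fejer's inequality for the first coefficient of a nonnegative trigonometric polynomial. -/
theorem fejer_first (N : ℕ) (hN : 1 ≤ N) (τ : ℕ → ℂ) (b : ℝ)
    (h : ∀ θ : ℝ, 0 ≤ b + 2 * (∑ l ∈ Finset.Icc 1 N, τ l * Complex.exp (-(l * θ * I))).re) :
    (τ 1).re ≤ b * Real.cos (Real.pi / ((N + 2 : ℕ) : ℝ)) := by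
  set M := N + 2 with hM
  have hMr : (0 : ℝ) < M := by rw [hM]; positivity
  set nd : ℕ → ℝ := fun s => Real.pi * (2 * s + 1) / M with hnd
  have key : 0 ≤ ∑ s ∈ Finset.range M, (Real.cos (Real.pi / M) - Real.cos (nd s)) *
      (b + 2 * (∑ l ∈ Finset.Icc 1 N, τ l * Complex.exp (-(l * (nd s) * I))).re) := by
    apply Finset.sum_nonneg
    intro s hs
    apply mul_nonneg _ (h _)
    have := cos_node_le M s (by omega) (Finset.mem_range.1 hs)
    simp only [hnd]; linarith
  have hz : ∀ l : ℤ, l ≠ 0 → |l| < M →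
      ∑ s ∈ Finset.range M, Complex.exp (((l * nd s : ℝ) : ℂ) * I) = 0 :=
    fun l h1 h2 => node_sum M l (by omega) h1 h2
  have hcos : ∑ s ∈ Finset.range M, Real.cos (nd s) = 0 := by
    have := congrArg Complex.re (hz 1 (by norm_num) (by simp; omega))
    simpa only [Complex.re_sum, Int.cast_one, one_mul, Complex.exp_ofReal_mul_I_re,
      Complex.zero_re] using this
  have hA : ∀ l ∈ Finset.Icc 1 N, ∑ s ∈ Finset.range M, Complex.exp (-(l * (nd s) * I)) = 0 := by
    intro l hl
    rw [Finset.mem_Icc] at hl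
    rw [← hz (-l) (by omega) (by rw [abs_neg, Nat.abs_cast]; omega)]
    refine Finset.sum_congr rfl fun s _ => ?_
    congr 1; push_cast; ring
  have hB : ∀ l ∈ Finset.Icc 1 N, ∑ s ∈ Finset.range M,
      (Real.cos (nd s) : ℂ) * Complex.exp (-(l * (nd s) * I)) = if l = 1 then (M / 2 : ℂ) else 0 := by
    intro l hl
    rw [Finset.mem_Icc] at hl
    have e1 : ∀ s : ℕ, (Real.cos (nd s) : ℂ) * Complex.exp (-(l * (nd s) * I)) =
        (1 / 2) * Complex.exp ((((1 - l : ℤ) * nd s : ℝ) : ℂ) * I) +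
        (1 / 2) * Complex.exp ((((-1 - l : ℤ) * nd s : ℝ) : ℂ) * I) := by
      intro s
      have x1 : Complex.exp ((((1 - l : ℤ) * nd s : ℝ) : ℂ) * I) =
        Complex.exp (nd s * I) * Complex.exp (-(l * (nd s) * I)) := by
        rw [← Complex.exp_add]; congr 1; push_cast; ring
      have x2 : Complex.exp ((((-1 - l : ℤ) * nd s : ℝ) : ℂ) * I) =
        Complex.exp (-nd s * I) * Complex.exp (-(l * (nd s) * I)) := by
        rw [← Complex.exp_add]; congr 1; push_cast; ring
      rw [x1, x2, Complex.ofReal_cos, Complex.cos]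
      ring
    simp_rw [e1]
    rw [Finset.sum_add_distrib, ← Finset.mul_sum, ← Finset.mul_sum,
      hz (-1 - l) (by omega) (by rw [abs_lt]; constructor <;> omega)]
    split_ifs with h1
    · subst h1; simp; ring
    · rw [hz (1 - l) (by omega) (by rw [abs_lt]; constructor <;> omega)]; simp
  have total : ∑ s ∈ Finset.range M, (Real.cos (Real.pi / M) - Real.cos (nd s)) *
      (b + 2 * (∑ l ∈ Finset.Icc 1 N, τ l * Complex.exp (-(l * (nd s) * I))).re)
      = M * (b * Real.cos (Real.pi / M) - (τ 1).re) := by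
    have e0 : ∀ s, (Real.cos (Real.pi / M) - Real.cos (nd s)) *
      (b + 2 * (∑ l ∈ Finset.Icc 1 N, τ l * Complex.exp (-(l * (nd s) * I))).re)
      = (Real.cos (Real.pi / M) - Real.cos (nd s)) * b +
        2 * (∑ l ∈ Finset.Icc 1 N, τ l * ((Real.cos (Real.pi / M) : ℂ) * Complex.exp (-(l * (nd s) * I))
          - (Real.cos (nd s) : ℂ) * Complex.exp (-(l * (nd s) * I)))).re := by
      intro s
      have : (∑ l ∈ Finset.Icc 1 N, τ l * ((Real.cos (Real.pi / M) : ℂ) * Complex.exp (-(l * (nd s) * I))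
          - (Real.cos (nd s) : ℂ) * Complex.exp (-(l * (nd s) * I)))) =
          ((Real.cos (Real.pi / M) - Real.cos (nd s) : ℝ) : ℂ) *
          ∑ l ∈ Finset.Icc 1 N, τ l * Complex.exp (-(l * (nd s) * I)) := by
        rw [Finset.mul_sum]
        refine Finset.sum_congr rfl fun l _ => ?_
        push_cast; ring
      rw [this, Complex.re_ofReal_mul]; ring
    simp_rw [e0]
    rw [Finset.sum_add_distrib, ← Finset.sum_mul, Finset.sum_sub_distrib, hcos, ← Finset.mul_sum,
      ← Complex.re_sum, Finset.sum_comm]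
    have e2 : ∀ l ∈ Finset.Icc 1 N, ∑ s ∈ Finset.range M,
        τ l * ((Real.cos (Real.pi / M) : ℂ) * Complex.exp (-(l * (nd s) * I))
          - (Real.cos (nd s) : ℂ) * Complex.exp (-(l * (nd s) * I))) =
        if l = 1 then - τ 1 * (M / 2) else 0 := by
      intro l hl
      rw [← Finset.mul_sum, Finset.sum_sub_distrib, ← Finset.mul_sum, hA l hl, hB l hl]
      split_ifs with h1
      · subst h1; ring
      · ring
    rw [Finset.sum_congr rfl e2, Finset.sum_ite_eq' ]
    have e3 : (-τ 1 * (M / 2 : ℂ)).re = - (τ 1).re * (M / 2) := by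
      have : (M / 2 : ℂ) = ((M / 2 : ℝ) : ℂ) := by push_cast; rfl
      rw [this, Complex.re_mul_ofReal]; simp
    rw [if_pos (by simp [hN]), e3]
    simp
    ring
  rw [total] at key
  have := nonneg_of_mul_nonneg_right key hMr
  linarith

open Complex in
open scoped InnerProductSpace in
/-- A banded Toeplitz compression of a contraction has symbol bounded by one. -/
theorem symbol_bound {E : Type*} [NormedAddCommGroup E] [InnerProductSpace ℂ E] [CompleteSpace E]
    (A H : E →L[ℂ] E) (a0 : ℝ) (hH : H = ContinuousLinearMap.adjoint A + (a0 : ℂ) • 1 + A)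
    (hn : ‖H‖ ≤ 1) (v : ℕ → E) (hv : Orthonormal ℂ v) (N : ℕ) (τ : ℕ → ℂ)
    (hA : ∀ i j, ⟪v j, A (v i)⟫_ℂ = if i < j ∧ j ≤ i + N then τ (j - i) else 0) (θ : ℝ) :
    |a0 + 2 * (∑ l ∈ Finset.Icc 1 N, τ l * Complex.exp (-(l * θ * I))).re| ≤ 1 := by
  set P := ∑ l ∈ Finset.Icc 1 N, τ l * Complex.exp (-(l * θ * I)) with hP
  set C := ∑ l ∈ Finset.Icc 1 N, ‖τ l‖ with hC
  have hC0 : 0 ≤ C := Finset.sum_nonneg fun _ _ => norm_nonneg _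
  have hnexp : ∀ l : ℕ, ‖Complex.exp (-(l * θ * I))‖ = 1 := by
    intro l
    have : (-(l * θ * I) : ℂ) = ((-(l * θ) : ℝ) : ℂ) * I := by push_cast; ring
    rw [this, Complex.norm_exp_ofReal_mul_I]
  have main : ∀ K : ℕ, |(a0 + 2 * P.re)| * K ≤ K + (N + N * |a0| + 2 * (N * C)) := by
    intro K
    set L := K + N with hL
    set z : ℕ → ℂ := fun j => Complex.exp (j * θ * I) with hz
    set x : E := ∑ j ∈ Finset.range L, z j • v j with hx
    have hzz : ∀ j, (starRingEnd ℂ) (z j) * z j = 1 := by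
      intro j
      rw [← Complex.exp_conj, ← Complex.exp_add]
      simp
    have hxx : ⟪x, x⟫_ℂ = L := by
      rw [hx, hv.inner_sum]
      simp [hzz]
    have hxn : ‖x‖ ^ 2 = L := by
      have := inner_self_eq_norm_sq_to_K (𝕜 := ℂ) x
      rw [hxx] at this
      have h2 : ((L : ℝ) : ℂ) = ((‖x‖ ^ 2 : ℝ) : ℂ) := by push_cast; simpa using this
      exact_mod_cast h2.symm
    have hxA : ⟪x, A x⟫_ℂ = ∑ i ∈ Finset.range L, ∑ l ∈ Finset.Icc 1 N,
        if i + l < L then τ l * Complex.exp (-(l * θ * I)) else 0 := by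
      have : ⟪x, A x⟫_ℂ = ∑ i ∈ Finset.range L, ∑ j ∈ Finset.range L,
          (z i * (starRingEnd ℂ) (z j)) * ⟪v j, A (v i)⟫_ℂ := by
        rw [hx, map_sum, inner_sum]
        refine Finset.sum_congr rfl fun i _ => ?_
        rw [sum_inner]
        refine Finset.sum_congr rfl fun j _ => ?_
        rw [map_smul, inner_smul_left, inner_smul_right]
        ring
      rw [this]
      refine Finset.sum_congr rfl fun i _ => ?_
      rw [← Finset.sum_filter]
      have e : ∀ j ∈ Finset.range L, (z i * (starRingEnd ℂ) (z j)) * ⟪v j, A (v i)⟫_ℂ =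
          if i < j ∧ j ≤ i + N then τ (j - i) * Complex.exp (-((j - i : ℕ) * θ * I)) else 0 := by
        intro j _
        rw [hA]
        split_ifs with h
        · rw [mul_comm]
          congr 1
          rw [← Complex.exp_conj, ← Complex.exp_add]
          congr 1
          simp
          rw [Nat.cast_sub h.1.le]
          ring
        · simp
      rw [Finset.sum_congr rfl e, ← Finset.sum_filter]
      refine Finset.sum_bij' (fun j _ => j - i) (fun l _ => l + i) ?_ ?_ ?_ ?_ ?_
      all_goals simp only [Finset.mem_filter, Finset.mem_range, Finset.mem_Icc]
      all_goals intros
      all_goals first | omega | rfl | trivial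
    obtain ⟨R, hR, hRn⟩ : ∃ R : ℂ, ⟪x, A x⟫_ℂ = K * P + R ∧ ‖R‖ ≤ N * C := by
      rw [hxA, hL, Finset.sum_range_add]
      refine ⟨_, congrArg₂ (· + ·) ?_ rfl, ?_⟩
      · rw [Finset.sum_congr rfl (g := fun _ => P)]
        · simp
        · intro i hi
          rw [Finset.mem_range] at hi
          refine Finset.sum_congr rfl fun l hl => ?_
          rw [Finset.mem_Icc] at hl
          rw [if_pos (by omega)]
      · refine (norm_sum_le _ _).trans ?_
        have : ∀ i ∈ Finset.range N, ‖∑ l ∈ Finset.Icc 1 N,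
            if K + i + l < K + N then τ l * Complex.exp (-(l * θ * I)) else 0‖ ≤ C := by
          intro i _
          refine (norm_sum_le _ _).trans (Finset.sum_le_sum fun l _ => ?_)
          split_ifs
          · rw [norm_mul, hnexp, mul_one]
          · simp
        refine (Finset.sum_le_sum this).trans ?_
        simp
    have hHx : ⟪x, H x⟫_ℂ = ((a0 * L + 2 * (K * P.re + R.re) : ℝ) : ℂ) := by
      have : ⟪x, H x⟫_ℂ = (starRingEnd ℂ) ⟪x, A x⟫_ℂ + a0 * L + ⟪x, A x⟫_ℂ := by
        rw [hH]
        simp only [add_apply, inner_add_right,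
          ContinuousLinearMap.adjoint_inner_right, smul_apply,
          one_apply_eq_self, inner_smul_right, hxx, inner_conj_symm]
      rw [this, hR]
      apply Complex.ext <;> simp <;> ring
    have hb : |a0 * L + 2 * (K * P.re + R.re)| ≤ L := by
      have h1 : ‖⟪x, H x⟫_ℂ‖ ≤ L := by
        refine (norm_inner_le_norm _ _).trans ?_
        have h2 : ‖H x‖ ≤ ‖x‖ := by
          refine (H.le_opNorm x).trans ?_
          nlinarith [norm_nonneg x]
        rw [← hxn]
        nlinarith [norm_nonneg x]
      rwa [hHx, Complex.norm_real, Real.norm_eq_abs] at h1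
    have hRr := (Complex.abs_re_le_norm R).trans hRn
    rw [hL] at hb
    push_cast at hb
    have hK : (0 : ℝ) ≤ K := by positivity
    have hN0 : (0 : ℝ) ≤ N := by positivity
    rw [← abs_of_nonneg hK, ← abs_mul, abs_of_nonneg hK]
    have h3 := le_abs_self a0
    have h4 := neg_abs_le a0
    rw [abs_le] at hb hRr ⊢
    have h5 : N * a0 ≤ N * |a0| := by gcongr
    have h6 : N * (-|a0|) ≤ N * a0 := by gcongr
    constructor <;> nlinarith
  by_contra hcon
  push Not at hcon
  obtain ⟨K, hK⟩ := exists_nat_gt ((N + N * |a0| + 2 * (N * C)) / (|(a0 + 2 * P.re)| - 1))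
  rw [div_lt_iff₀ (by linarith)] at hK
  have := main K
  nlinarith

/-- Combination of the two: bound for the first coefficient. -/
theorem coeff_bound_s16 {E : Type*} [NormedAddCommGroup E] [InnerProductSpace ℂ E] [CompleteSpace E]
    (A H : E →L[ℂ] E) (a0 : ℝ) (hH : H = ContinuousLinearMap.adjoint A + (a0 : ℂ) • 1 + A)
    (hn : ‖H‖ ≤ 1) (v : ℕ → E) (hv : Orthonormal ℂ v) (N : ℕ) (hN : 1 ≤ N) (τ : ℕ → ℂ)
    (hA : ∀ i j, inner ℂ (v j) (A (v i)) = if i < j ∧ j ≤ i + N then τ (j - i) else 0) :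
    (τ 1).re ≤ (1 - |a0|) * Real.cos (Real.pi / ((N + 2 : ℕ) : ℝ)) := by
  have hb := symbol_bound A H a0 hH hn v hv N τ hA
  rcases abs_cases a0 with ⟨h, _⟩ | ⟨h, _⟩
  · rw [h]
    have := fejer_first N hN (fun l => -(-1) ^ l * τ l) (1 - a0) (by
      intro θ
      have h1 := (abs_le.1 (hb (θ + Real.pi))).2
      have : (∑ l ∈ Finset.Icc 1 N, (-(-1) ^ l * τ l) * Complex.exp (-(l * θ * Complex.I))) =
        - ∑ l ∈ Finset.Icc 1 N, τ l * Complex.exp (-(l * ((θ + Real.pi : ℝ) : ℂ) * Complex.I)) := by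
        rw [← Finset.sum_neg_distrib]
        refine Finset.sum_congr rfl fun l _ => ?_
        have e : Complex.exp (-(l * ((θ + Real.pi : ℝ) : ℂ) * Complex.I)) =
            (-1) ^ l * Complex.exp (-(l * θ * Complex.I)) := by
          have e2 : (-1 : ℂ) ^ l = Complex.exp (l * (-(Real.pi * Complex.I))) := by
            rw [Complex.exp_nat_mul, Complex.exp_neg, Complex.exp_pi_mul_I]; norm_num
          rw [e2, ← Complex.exp_add]
          congr 1
          push_cast
          ring
        rw [e]; ring
      rw [this, Complex.neg_re]
      linarith)
    simpa using this
  · rw [h]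
    refine (fejer_first N hN τ (1 - -a0) fun θ => ?_)
    have h1 := (abs_le.1 (hb θ)).1
    linarith

theorem fockBasis_inner (n : ℕ) (α β : List (Fin n)) :
    inner ℂ (fockBasis n α) (fockBasis n β) = if α = β then 1 else 0 := by
  unfold fockBasis
  rw [lp.inner_single_left, lp.single_apply]
  by_cases h : α = β
  · subst h; simp
  · simp [h]

/-- Finite combinations of basis vectors whose words satisfy `p`. -/
noncomputable def fspan (n : ℕ) (p : List (Fin n) → Prop) : Submodule ℂ (Fock n) :=
  Submodule.span ℂ (fockBasis n '' {α | p α})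

theorem fspan_mono {n : ℕ} {p q : List (Fin n) → Prop} (h : ∀ α, p α → q α) :
    fspan n p ≤ fspan n q :=
  Submodule.span_mono (Set.image_mono fun _ hα => h _ hα)

/-- Two sesquilinear expressions agreeing on basis vectors agree on the spans. -/
theorem fspan_sesq {n : ℕ} (p q : List (Fin n) → Prop) (B C : Fock n →L[ℂ] Fock n) (s : ℂ)
    (h : ∀ α β, p α → q β → inner ℂ (B (fockBasis n α)) (C (fockBasis n β)) =
      s * inner ℂ (fockBasis n α) (fockBasis n β)) (x y : Fock n) (hx : x ∈ fspan n p)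
    (hy : y ∈ fspan n q) : inner ℂ (B x) (C y) = s * inner ℂ x y := by
  unfold fspan at hx hy
  induction hx using Submodule.span_induction with
  | mem x hx =>
    obtain ⟨α, hα, rfl⟩ := hx
    induction hy using Submodule.span_induction with
    | mem y hy =>
      obtain ⟨β, hβ, rfl⟩ := hy
      exact h α β hα hβ
    | zero => simp
    | add y z _ _ h1 h2 => rw [map_add, inner_add_right, inner_add_right, h1, h2]; ring
    | smul c y _ h1 => rw [map_smul, inner_smul_right, inner_smul_right, h1]; ring
  | zero => simp
  | add y z _ _ h1 h2 => rw [map_add, inner_add_left, inner_add_left, h1, h2]; ring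
  | smul c y _ h1 => rw [map_smul, inner_smul_left, inner_smul_left, h1]; ring

theorem wordProd_basis {n : ℕ} (S : Fin n → Fock n →L[ℂ] Fock n)
    (hS : ∀ (i : Fin n) (α : List (Fin n)), S i (fockBasis n α) = fockBasis n (i :: α))
    (α β : List (Fin n)) :
    wordProd S α (fockBasis n β) = fockBasis n (α ++ β) := by
  induction α with
  | nil => simp [wordProd]
  | cons i α ih =>
    have : wordProd S (i :: α) = S i * wordProd S α := by simp [wordProd]
    rw [this, mul_apply_eq_comp, ih, hS]; rfl

/-- `S_α` and `S_β` have orthogonal ranges and are isometric, on finite combinations. -/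
theorem wordProd_inner {n : ℕ} (S : Fin n → Fock n →L[ℂ] Fock n)
    (hS : ∀ (i : Fin n) (α : List (Fin n)), S i (fockBasis n α) = fockBasis n (i :: α))
    (α β : List (Fin n)) (hl : α.length = β.length) (x y : Fock n)
    (hx : x ∈ fspan n fun _ => True) (hy : y ∈ fspan n fun _ => True) :
    inner ℂ (wordProd S α x) (wordProd S β y) = (if α = β then 1 else 0) * inner ℂ x y := by
  refine fspan_sesq _ _ _ _ _ (fun γ δ _ _ => ?_) x y hx hy
  rw [wordProd_basis S hS, wordProd_basis S hS, fockBasis_inner, fockBasis_inner]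
  by_cases h : α = β
  · subst h; simp
  · rw [if_neg h, zero_mul, if_neg]
    intro h2
    exact h (List.append_inj_left h2 hl)

/-- The homogeneous operator of degree `k` with coefficients `c`. -/
noncomputable def homOp {n : ℕ} (S : Fin n → Fock n →L[ℂ] Fock n) (c : List (Fin n) → ℂ) (k : ℕ) :
    Fock n →L[ℂ] Fock n :=
  ∑ w : Fin k → Fin n, c (List.ofFn w) • wordProd S (List.ofFn w)

theorem homOp_apply {n : ℕ} (S : Fin n → Fock n →L[ℂ] Fock n) (c : List (Fin n) → ℂ) (k : ℕ)
    (x : Fock n) : homOp S c k x =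
      ∑ w : Fin k → Fin n, c (List.ofFn w) • wordProd S (List.ofFn w) x := by
  simp [homOp, sum_apply]

theorem homOp_mem {n : ℕ} (S : Fin n → Fock n →L[ℂ] Fock n)
    (hS : ∀ (i : Fin n) (α : List (Fin n)), S i (fockBasis n α) = fockBasis n (i :: α))
    (c : List (Fin n) → ℂ) (k d : ℕ) (x : Fock n) (hx : x ∈ fspan n fun α => α.length = d) :
    homOp S c k x ∈ fspan n fun α => α.length = k + d := by
  rw [homOp_apply]
  refine Submodule.sum_mem _ fun w _ => Submodule.smul_mem _ _ ?_
  unfold fspan at hx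
  induction hx using Submodule.span_induction with
  | mem x hx =>
    obtain ⟨α, hα, rfl⟩ := hx
    rw [wordProd_basis S hS]
    refine Submodule.subset_span ⟨_, ?_, rfl⟩
    simp only [Set.mem_setOf_eq] at hα ⊢
    simp [hα]
  | zero => simp
  | add y z _ _ h1 h2 => rw [map_add]; exact Submodule.add_mem _ h1 h2
  | smul c y _ h1 => rw [map_smul]; exact Submodule.smul_mem _ _ h1

theorem fspan_orth {n d e : ℕ} (hde : d ≠ e) (x y : Fock n)
    (hx : x ∈ fspan n fun α => α.length = d) (hy : y ∈ fspan n fun α => α.length = e) :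
    inner ℂ x y = 0 := by
  have := fspan_sesq (fun α : List (Fin n) => α.length = d) (fun α => α.length = e) 1 1 0
    (fun α β hα hβ => by
      simp only [one_apply_eq_self, zero_mul]
      rw [fockBasis_inner, if_neg]
      rintro rfl
      exact hde (hα.symm.trans hβ)) x y hx hy
  simpa using this

/-- `V^* S_β` is scalar when `β` has length `k`. -/
theorem homOp_inner_word {n : ℕ} (S : Fin n → Fock n →L[ℂ] Fock n)
    (hS : ∀ (i : Fin n) (α : List (Fin n)), S i (fockBasis n α) = fockBasis n (i :: α))
    (c : List (Fin n) → ℂ) (k : ℕ) (β : List (Fin n)) (hβ : β.length = k) (x y : Fock n)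
    (hx : x ∈ fspan n fun _ => True) (hy : y ∈ fspan n fun _ => True) :
    inner ℂ (homOp S c k x) (wordProd S β y) = (starRingEnd ℂ) (c β) * inner ℂ x y := by
  subst hβ
  rw [homOp_apply, sum_inner, Finset.sum_eq_single (fun i => β.get i)]
  · rw [inner_smul_left, wordProd_inner S hS _ _ (by simp) x y hx hy, List.ofFn_get]
    simp
  · intro w _ hw
    rw [inner_smul_left, wordProd_inner S hS _ _ (by simp) x y hx hy, if_neg]
    · simp
    · intro h
      apply hw
      apply List.ofFn_injective
      rw [h, List.ofFn_get]
  · simp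

theorem homOp_inner {n : ℕ} (S : Fin n → Fock n →L[ℂ] Fock n)
    (hS : ∀ (i : Fin n) (α : List (Fin n)), S i (fockBasis n α) = fockBasis n (i :: α))
    (c a : List (Fin n) → ℂ) (k : ℕ) (x y : Fock n)
    (hx : x ∈ fspan n fun _ => True) (hy : y ∈ fspan n fun _ => True) :
    inner ℂ (homOp S c k x) (homOp S a k y) =
      (∑ w : Fin k → Fin n, (starRingEnd ℂ) (c (List.ofFn w)) * a (List.ofFn w)) *
        inner ℂ x y := by
  rw [homOp_apply S a, inner_sum, Finset.sum_mul]
  refine Finset.sum_congr rfl fun w _ => ?_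
  rw [inner_smul_right, homOp_inner_word S hS c k _ (by simp) x y hx hy]
  ring

theorem homOp_mem_true {n : ℕ} (S : Fin n → Fock n →L[ℂ] Fock n)
    (hS : ∀ (i : Fin n) (α : List (Fin n)), S i (fockBasis n α) = fockBasis n (i :: α))
    (c : List (Fin n) → ℂ) (k : ℕ) (x : Fock n) (hx : x ∈ fspan n fun _ => True) :
    homOp S c k x ∈ fspan n fun _ => True := by
  unfold fspan at hx
  induction hx using Submodule.span_induction with
  | mem x hx =>
    obtain ⟨α, hα, rfl⟩ := hx
    exact fspan_mono (fun _ _ => trivial)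
      (homOp_mem S hS c k α.length _ (Submodule.subset_span ⟨α, rfl, rfl⟩))
  | zero => simp
  | add y z _ _ h1 h2 => rw [map_add]; exact Submodule.add_mem _ h1 h2
  | smul c y _ h1 => rw [map_smul]; exact Submodule.smul_mem _ _ h1

theorem homOp_pow_mem {n : ℕ} (S : Fin n → Fock n →L[ℂ] Fock n)
    (hS : ∀ (i : Fin n) (α : List (Fin n)), S i (fockBasis n α) = fockBasis n (i :: α))
    (c : List (Fin n) → ℂ) (k l : ℕ) (x : Fock n) (hx : x ∈ fspan n fun _ => True) :
    (homOp S c k ^ l) x ∈ fspan n fun _ => True := by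
  induction l with
  | zero => simpa using hx
  | succ l ih =>
    rw [pow_succ', mul_apply_eq_comp]
    exact homOp_mem_true S hS c k _ ih

theorem homOp_pow_word {n : ℕ} (S : Fin n → Fock n →L[ℂ] Fock n)
    (hS : ∀ (i : Fin n) (α : List (Fin n)), S i (fockBasis n α) = fockBasis n (i :: α))
    (c : List (Fin n) → ℂ) (k l : ℕ) : ∀ α : List (Fin n), α.length = l * k →
    ∃ s : ℂ, ∀ x y : Fock n, x ∈ (fspan n fun _ => True) → y ∈ (fspan n fun _ => True) →
      inner ℂ ((homOp S c k ^ l) x) (wordProd S α y) = s * inner ℂ x y := by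
  induction l with
  | zero =>
    intro α hα
    have : α = [] := List.length_eq_zero_iff.1 (by simpa using hα)
    subst this
    exact ⟨1, fun x y _ _ => by simp [wordProd]⟩
  | succ l ih =>
    intro α hα
    obtain ⟨s, hs⟩ := ih (α.drop k) (by rw [List.length_drop, hα, Nat.succ_mul]; omega)
    refine ⟨(starRingEnd ℂ) (c (α.take k)) * s, fun x y hx hy => ?_⟩
    have h1 : wordProd S α = wordProd S (α.take k) * wordProd S (α.drop k) := by
      conv_lhs => rw [← List.take_append_drop k α]
      simp only [wordProd, List.map_append, List.prod_append]
    have hmem : wordProd S (α.drop k) y ∈ fspan n fun _ => True := by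
      have h2 := homOp_mem_true S hS (fun β => if β = α.drop k then 1 else 0) (α.drop k).length y hy
      rw [homOp_apply, Finset.sum_eq_single (fun i => (α.drop k).get i)] at h2
      · rw [List.ofFn_get] at h2
        simpa using h2
      · intro w _ hw
        rw [if_neg, zero_smul]
        intro h
        apply hw
        apply List.ofFn_injective
        rw [h, List.ofFn_get]
      · simp
    rw [h1, mul_apply_eq_comp, pow_succ', mul_apply_eq_comp,
      homOp_inner_word S hS c k _ (by rw [List.length_take, hα, Nat.succ_mul]; omega) _ _
        (homOp_pow_mem S hS c k l x hx) hmem, hs x y hx hy]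
    ring

theorem homOp_pow_hom {n : ℕ} (S : Fin n → Fock n →L[ℂ] Fock n)
    (hS : ∀ (i : Fin n) (α : List (Fin n)), S i (fockBasis n α) = fockBasis n (i :: α))
    (c a : List (Fin n) → ℂ) (k l : ℕ) :
    ∃ s : ℂ, ∀ x y : Fock n, x ∈ (fspan n fun _ => True) → y ∈ (fspan n fun _ => True) →
      inner ℂ ((homOp S c k ^ l) x) (homOp S a (l * k) y) = s * inner ℂ x y := by
  choose s hs using fun w : Fin (l * k) → Fin n =>
    homOp_pow_word S hS c k l (List.ofFn w) (by simp)
  refine ⟨∑ w, a (List.ofFn w) * s w, fun x y hx hy => ?_⟩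
  rw [homOp_apply S a, inner_sum, Finset.sum_mul]
  refine Finset.sum_congr rfl fun w _ => ?_
  rw [inner_smul_right, hs w x y hx hy]
  ring

/-- The key estimate: coefficients of degree `k` paired with a unit vector. -/
theorem key_bound {n : ℕ} (m : ℕ) (a : List (Fin n) → ℂ) (a0 : ℝ)
    (S : Fin n → Fock n →L[ℂ] Fock n)
    (hS : ∀ (i : Fin n) (α : List (Fin n)), S i (fockBasis n α) = fockBasis n (i :: α))
    (H : Fock n →L[ℂ] Fock n)
    (hH : H = ContinuousLinearMap.adjoint (∑ k ∈ Finset.Icc 1 (m - 1), homOp S a k)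
      + (a0 : ℂ) • 1 + ∑ k ∈ Finset.Icc 1 (m - 1), homOp S a k)
    (hnorm : ‖H‖ ≤ 1) (k : ℕ) (hk : k ∈ Finset.Icc 1 (m - 1)) (c : List (Fin n) → ℂ)
    (hc : ∑ w : Fin k → Fin n, (starRingEnd ℂ) (c (List.ofFn w)) * c (List.ofFn w) = 1) :
    (∑ w : Fin k → Fin n, (starRingEnd ℂ) (c (List.ofFn w)) * a (List.ofFn w)).re ≤
      (1 - |a0|) * Real.cos (Real.pi / (((m - 1) / k + 2 : ℕ) : ℝ)) := by
  rw [Finset.mem_Icc] at hk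
  set V := homOp S c k with hV
  set e := fockBasis n [] with he
  have heT : e ∈ fspan n fun _ => True := Submodule.subset_span ⟨_, trivial, rfl⟩
  have hee : inner ℂ e e = 1 := by rw [he, fockBasis_inner]; simp
  have hdeg : ∀ j, (V ^ j) e ∈ fspan n fun α => α.length = j * k := by
    intro j
    induction j with
    | zero => exact Submodule.subset_span ⟨[], by simp, by simp [he]⟩
    | succ j ih =>
      rw [pow_succ', mul_apply_eq_comp, Nat.succ_mul, add_comm]
      exact homOp_mem S hS c k _ _ ih
  have hmem : ∀ j, (V ^ j) e ∈ fspan n fun _ => True := fun j => homOp_pow_mem S hS c k j e heT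
  have hunit : ∀ j, inner ℂ ((V ^ j) e) ((V ^ j) e) = 1 := by
    intro j
    induction j with
    | zero => simpa using hee
    | succ j ih =>
      rw [pow_succ', mul_apply_eq_comp, hV, homOp_inner S hS c c k _ _ (hmem j) (hmem j), hc, ih,
        one_mul]
  have hv : Orthonormal ℂ fun j => (V ^ j) e := by
    rw [orthonormal_iff_ite]
    intro i j
    split_ifs with h
    · subst h; exact hunit i
    · refine fspan_orth ?_ _ _ (hdeg i) (hdeg j)
      intro h2
      exact h (Nat.eq_of_mul_eq_mul_right (by omega) h2)
  choose τ hτ using fun l => homOp_pow_hom S hS c a k l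
  have h1 : τ 1 = ∑ w : Fin k → Fin n, (starRingEnd ℂ) (c (List.ofFn w)) * a (List.ofFn w) := by
    have h2 := hτ 1 e e heT heT
    rw [pow_one, one_mul, homOp_inner S hS c a k e e heT heT, hee] at h2
    simpa using h2.symm
  rw [← h1]
  refine coeff_bound_s16 _ H a0 hH hnorm _ hv ((m - 1) / k) ((Nat.one_le_div_iff (by omega)).2 hk.2) τ ?_
  intro i j
  rw [sum_apply, inner_sum]
  have hzero : ∀ d, d + i * k ≠ j * k →
      inner ℂ ((V ^ j) e) (homOp S a d ((V ^ i) e)) = 0 := fun d hd =>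
    fspan_orth (Ne.symm hd) _ _ (hdeg j) (homOp_mem S hS a d _ _ (hdeg i))
  split_ifs with h
  · obtain ⟨h3, h4⟩ := h
    obtain ⟨l, rfl⟩ : ∃ l, j = l + i := ⟨j - i, by omega⟩
    have hl : l ≤ (m - 1) / k := by omega
    have hlk : l * k ≤ m - 1 := (Nat.le_div_iff_mul_le (by omega)).1 hl
    rw [Finset.sum_eq_single (l * k), pow_add, mul_apply_eq_comp, hτ l _ _ (hmem i) (hmem i),
      hunit, mul_one, Nat.add_sub_cancel]
    · intro d _ hd
      apply hzero
      rw [add_mul]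
      omega
    · intro h5
      exfalso
      apply h5
      rw [Finset.mem_Icc]
      have : 1 * 1 ≤ l * k := Nat.mul_le_mul (by omega) (by omega)
      omega
  · refine Finset.sum_eq_zero fun d hd => hzero d fun h5 => h ?_
    rw [Finset.mem_Icc] at hd
    have h6 : i < j := by
      by_contra h7
      have := Nat.mul_le_mul_right k (not_lt.1 h7)
      omega
    refine ⟨h6, ?_⟩
    obtain ⟨l, rfl⟩ : ∃ l, j = l + i := ⟨j - i, by omega⟩
    have hl : l * k ≤ m - 1 := by rw [add_mul] at h5; omega
    have := (Nat.le_div_iff_mul_le (by omega : 0 < k)).2 hl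
    omega

theorem l2_bound {n : ℕ} (hn : 1 ≤ n) (m : ℕ) (a : List (Fin n) → ℂ) (a0 : ℝ)
    (S : Fin n → Fock n →L[ℂ] Fock n)
    (hS : ∀ (i : Fin n) (α : List (Fin n)), S i (fockBasis n α) = fockBasis n (i :: α))
    (H : Fock n →L[ℂ] Fock n)
    (hH : H = ContinuousLinearMap.adjoint (∑ k ∈ Finset.Icc 1 (m - 1), homOp S a k)
      + (a0 : ℂ) • 1 + ∑ k ∈ Finset.Icc 1 (m - 1), homOp S a k)
    (hnorm : ‖H‖ ≤ 1) (k : ℕ) (hk : k ∈ Finset.Icc 1 (m - 1)) :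
    Real.sqrt (∑ w : Fin k → Fin n, ‖a (List.ofFn w)‖ ^ 2) ≤
      (1 - |a0|) * Real.cos (Real.pi / (((m - 1) / k + 2 : ℕ) : ℝ)) := by
  set s := Real.sqrt (∑ w : Fin k → Fin n, ‖a (List.ofFn w)‖ ^ 2) with hs
  have hsum0 : 0 ≤ ∑ w : Fin k → Fin n, ‖a (List.ofFn w)‖ ^ 2 :=
    Finset.sum_nonneg fun _ _ => by positivity
  have hss : s ^ 2 = ∑ w : Fin k → Fin n, ‖a (List.ofFn w)‖ ^ 2 := Real.sq_sqrt hsum0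
  have hcc : ∑ w : Fin k → Fin n, (starRingEnd ℂ) (a (List.ofFn w)) * a (List.ofFn w) =
      ((s ^ 2 : ℝ) : ℂ) := by
    rw [hss]
    push_cast
    refine Finset.sum_congr rfl fun w _ => ?_
    rw [Complex.conj_mul']
  by_cases h0 : s = 0
  · have ha : ∀ w : Fin k → Fin n, a (List.ofFn w) = 0 := by
      intro w
      rw [h0, eq_comm] at hss
      have := (Finset.sum_eq_zero_iff_of_nonneg (fun _ _ => by positivity)).1
        (hss.trans (by norm_num)) w (Finset.mem_univ w)
      simpa using this
    set w0 : Fin k → Fin n := fun _ => ⟨0, hn⟩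
    have := key_bound m a a0 S hS H hH hnorm k hk (fun α => if α = List.ofFn w0 then 1 else 0) (by
      rw [Finset.sum_eq_single w0]
      · simp
      · intro w _ hw
        rw [if_neg (fun h => hw (List.ofFn_injective h))]
        simp
      · simp)
    rw [h0]
    simpa [ha] using this
  · have hsC : (s : ℂ) ≠ 0 := by exact_mod_cast h0
    have e1 : ∀ b : Fin k → Fin n, (starRingEnd ℂ) (a (List.ofFn b) / s) =
        (starRingEnd ℂ) (a (List.ofFn b)) / s := fun b => by
      rw [map_div₀, Complex.conj_ofReal]
    have := key_bound m a a0 S hS H hH hnorm k hk (fun α => a α / s) (by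
      simp only [e1]
      have : ∀ b : Fin k → Fin n, (starRingEnd ℂ) (a (List.ofFn b)) / s * (a (List.ofFn b) / s) =
        ((starRingEnd ℂ) (a (List.ofFn b)) * a (List.ofFn b)) / s ^ 2 := fun b => by
          field_simp
      simp only [this]
      rw [← Finset.sum_div, hcc]
      push_cast
      field_simp)
    simp only [e1] at this
    have e2 : ∑ b : Fin k → Fin n, (starRingEnd ℂ) (a (List.ofFn b)) / s * a (List.ofFn b) = (s : ℂ) := by
      simp only [div_mul_eq_mul_div]
      rw [← Finset.sum_div, hcc]
      push_cast
      field_simp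
    rwa [e2, Complex.ofReal_re] at this

theorem stmt_16 (n : ℕ) (hn : 1 ≤ n) (m : ℕ) (hm : 3 ≤ m)
    (a : List (Fin n) → ℂ) (a0 : ℝ)
    (S : Fin n → Fock n →L[ℂ] Fock n)
    (hS : ∀ (i : Fin n) (α : List (Fin n)), S i (fockBasis n α) = fockBasis n (i :: α))
    (H : Fock n →L[ℂ] Fock n)
    (hH : H = (∑ k ∈ Finset.Icc 1 (m - 1), ∑ w : Fin k → Fin n,
        ((starRingEnd ℂ) (a (List.ofFn w))) •
          ContinuousLinearMap.adjoint (wordProd S (List.ofFn w)))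
      + (a0 : ℂ) • 1
      + ∑ k ∈ Finset.Icc 1 (m - 1), ∑ w : Fin k → Fin n,
          a (List.ofFn w) • wordProd S (List.ofFn w))
    (hsa : IsSelfAdjoint H) (hnorm : ‖H‖ ≤ 1)
    (γ : ℝ) (hγm : γ ∈ Set.Ioo (0 : ℝ) 1) (hγs : fm m γ = 1) :
    ∀ r : Fin n → ℝ, (∀ i, 0 ≤ r i) → Real.sqrt (∑ i, r i ^ 2) ≤ γ →
      |a0| + ∑ k ∈ Finset.Icc 1 (m - 1), ∑ w : Fin k → Fin n,
        ‖a (List.ofFn w)‖ * wordProd r (List.ofFn w) ≤ 1 := by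
  intro r hr hrγ
  have hH' : H = ContinuousLinearMap.adjoint (∑ k ∈ Finset.Icc 1 (m - 1), homOp S a k)
      + (a0 : ℂ) • 1 + ∑ k ∈ Finset.Icc 1 (m - 1), homOp S a k := by
    rw [hH]
    simp only [homOp, map_sum, map_smulₛₗ]
  have hl2 := l2_bound hn m a a0 S hS H hH' hnorm
  have ha0 : 0 ≤ 1 - |a0| := by
    have h1 := hl2 1 (Finset.mem_Icc.2 ⟨le_rfl, by omega⟩)
    have h2 := (Real.sqrt_nonneg _).trans h1
    refine nonneg_of_mul_nonneg_left h2 ?_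
    apply Real.cos_pos_of_mem_Ioo
    have hp := Real.pi_pos
    have hq : (2 : ℝ) < (((m - 1) / 1 + 2 : ℕ) : ℝ) := by
      rw [Nat.div_one]
      exact_mod_cast (by omega : 2 < m - 1 + 2)
    constructor
    · have : 0 < Real.pi / (((m - 1) / 1 + 2 : ℕ) : ℝ) := div_pos hp (by linarith)
      linarith
    · exact div_lt_div_of_pos_left hp (by norm_num) hq
  set ρ := Real.sqrt (∑ i, r i ^ 2) with hρ
  have hρ0 : 0 ≤ ρ := Real.sqrt_nonneg _
  have hterm : ∀ k ∈ Finset.Icc 1 (m - 1), ∑ w : Fin k → Fin n,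
      ‖a (List.ofFn w)‖ * wordProd r (List.ofFn w) ≤
      (1 - |a0|) * (γ ^ k * Real.cos (Real.pi / (((m - 1) / k + 2 : ℕ) : ℝ))) := by
    intro k hk
    have hb := hl2 k hk
    have hsq : Real.sqrt (∑ w : Fin k → Fin n, wordProd r (List.ofFn w) ^ 2) = ρ ^ k := by
      have : ∑ w : Fin k → Fin n, wordProd r (List.ofFn w) ^ 2 = (ρ ^ k) ^ 2 := by
        rw [← pow_mul, mul_comm, pow_mul, hρ, Real.sq_sqrt (Finset.sum_nonneg fun _ _ => sq_nonneg _),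
          Fintype.sum_pow]
        refine Finset.sum_congr rfl fun w _ => ?_
        rw [wordProd, List.map_ofFn, List.prod_ofFn, ← Finset.prod_pow]
        rfl
      rw [this, Real.sqrt_sq (by positivity)]
    calc _ ≤ _ := Real.sum_mul_le_sqrt_mul_sqrt _ _ _
      _ ≤ ((1 - |a0|) * Real.cos (Real.pi / (((m - 1) / k + 2 : ℕ) : ℝ))) * γ ^ k := by
        rw [hsq]
        have hpow : ρ ^ k ≤ γ ^ k := pow_le_pow_left₀ hρ0 hrγ k
        exact mul_le_mul hb hpow (by positivity) ((Real.sqrt_nonneg _).trans hb)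
      _ = _ := by ring
  have hs := Finset.sum_le_sum hterm
  rw [← Finset.mul_sum] at hs
  have hγ' : ∑ k ∈ Finset.Icc 1 (m - 1), γ ^ k * Real.cos (Real.pi / (((m - 1) / k + 2 : ℕ) : ℝ)) = 1 :=
    hγs
  rw [hγ'] at hs
  linarith
end

section
/- Let f and g be real-valued integrable functions on the circle (i.e., f, g ∈ L¹(𝕋) with real values almost everywhere) with Fourier coefficients f̂(k) and ĝ(k), k ∈ ℤ (so f̂(0) and ĝ(0) are real). If f ≤ g almost everywhere, then: (i) |ĝ(k) − f̂(k)| ≤ ĝ(0) − f̂(0) for every k ∈ ℤ with k ≠ 0; and (ii) f̂(0)/2 + ∑_{k=1}^∞ r^k |f̂(k)| ≤ ĝ(0)/2 + ∑_{k=1}^∞ r^k |ĝ(k)| for every r ∈ [0, 1/3]. -/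
open scoped BigOperators

instance : Fact (0 < 2 * Real.pi) := ⟨by positivity⟩

lemma aux_norm_le (h : AddCircle (2 * Real.pi) → ℝ) (k : ℤ) :
    ‖fourierCoeff (fun x => (h x : ℂ)) k‖ ≤ ∫ x, |h x| ∂AddCircle.haarAddCircle := by
  unfold fourierCoeff
  refine (MeasureTheory.norm_integral_le_integral_norm _).trans (le_of_eq ?_)
  congr 1
  funext x
  rw [norm_smul, Complex.norm_real, Real.norm_eq_abs, fourier_apply, Circle.norm_coe, one_mul]

lemma aux_zero (h : AddCircle (2 * Real.pi) → ℝ) :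
    (fourierCoeff (fun x => (h x : ℂ)) 0).re = ∫ x, h x ∂AddCircle.haarAddCircle := by
  have : fourierCoeff (fun x => (h x : ℂ)) 0
      = ((∫ x, h x ∂AddCircle.haarAddCircle : ℝ) : ℂ) := by
    rw [← integral_complex_ofReal]
    simp [fourierCoeff]
  rw [this, Complex.ofReal_re]

lemma aux_sub (f g : AddCircle (2 * Real.pi) → ℝ)
    (hf : MeasureTheory.Integrable f AddCircle.haarAddCircle)
    (hg : MeasureTheory.Integrable g AddCircle.haarAddCircle) (k : ℤ) :
    fourierCoeff (fun x => (g x : ℂ)) k - fourierCoeff (fun x => (f x : ℂ)) k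
      = fourierCoeff (fun x => ((g x - f x : ℝ) : ℂ)) k := by
  have h := congrFun (fourierCoeff.add (f := fun x => (f x : ℂ))
    (g := fun x => ((g x - f x : ℝ) : ℂ)) hf.ofReal (hg.sub hf).ofReal) k
  have e : (fun x => (f x : ℂ)) + (fun x => ((g x - f x : ℝ) : ℂ)) = fun x => (g x : ℂ) := by
    funext x
    simp
  rw [e, Pi.add_apply] at h
  rw [h]
  ring

lemma aux_summable (h : AddCircle (2 * Real.pi) → ℝ) (r : ℝ) (h0 : 0 ≤ r) (h1 : r ≤ 1 / 3) :
    Summable (fun k : ℕ =>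
      r ^ (k + 1) * ‖fourierCoeff (fun x => (h x : ℂ)) ((k : ℤ) + 1)‖) := by
  have hs : Summable (fun k : ℕ => r ^ (k + 1) * ∫ x, |h x| ∂AddCircle.haarAddCircle) :=
    ((summable_nat_add_iff 1).2
      (summable_geometric_of_lt_one h0 (by linarith))).mul_right _
  refine Summable.of_nonneg_of_le (fun k => by positivity) (fun k => ?_) hs
  exact mul_le_mul_of_nonneg_left (aux_norm_le h _) (by positivity)

theorem stmt_19 (f g : AddCircle (2 * Real.pi) → ℝ)
    (hf : MeasureTheory.Integrable f AddCircle.haarAddCircle)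
    (hg : MeasureTheory.Integrable g AddCircle.haarAddCircle)
    (hle : ∀ᵐ x ∂(AddCircle.haarAddCircle), f x ≤ g x) :
    (∀ k : ℤ, k ≠ 0 →
      ‖fourierCoeff (fun x => (g x : ℂ)) k -
          fourierCoeff (fun x => (f x : ℂ)) k‖ ≤
        (fourierCoeff (fun x => (g x : ℂ)) 0).re -
          (fourierCoeff (fun x => (f x : ℂ)) 0).re) ∧
    (∀ r : ℝ, 0 ≤ r → r ≤ 1 / 3 →
      Summable (fun k : ℕ =>
        r ^ (k + 1) * ‖fourierCoeff (fun x => (f x : ℂ)) ((k : ℤ) + 1)‖) ∧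
      Summable (fun k : ℕ =>
        r ^ (k + 1) * ‖fourierCoeff (fun x => (g x : ℂ)) ((k : ℤ) + 1)‖) ∧
      (fourierCoeff (fun x => (f x : ℂ)) 0).re / 2 +
        ∑' k : ℕ, r ^ (k + 1) * ‖fourierCoeff (fun x => (f x : ℂ)) ((k : ℤ) + 1)‖ ≤
      (fourierCoeff (fun x => (g x : ℂ)) 0).re / 2 +
        ∑' k : ℕ, r ^ (k + 1) * ‖fourierCoeff (fun x => (g x : ℂ)) ((k : ℤ) + 1)‖) := by
  have key : ∀ k : ℤ, ‖fourierCoeff (fun x => (g x : ℂ)) k -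
          fourierCoeff (fun x => (f x : ℂ)) k‖ ≤
        (fourierCoeff (fun x => (g x : ℂ)) 0).re -
          (fourierCoeff (fun x => (f x : ℂ)) 0).re := by
    intro k
    rw [aux_sub f g hf hg, aux_zero, aux_zero, ← MeasureTheory.integral_sub hg hf]
    refine (aux_norm_le (fun x => g x - f x) k).trans (le_of_eq ?_)
    refine MeasureTheory.integral_congr_ae ?_
    filter_upwards [hle] with x hx
    exact abs_of_nonneg (sub_nonneg.2 hx)
  refine ⟨fun k _ => key k, fun r h0 h1 => ?_⟩
  have sf := aux_summable f r h0 h1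
  have sg := aux_summable g r h0 h1
  refine ⟨sf, sg, ?_⟩
  set D := (fourierCoeff (fun x => (g x : ℂ)) 0).re -
          (fourierCoeff (fun x => (f x : ℂ)) 0).re with hD
  have D0 : 0 ≤ D := (norm_nonneg _).trans (key 0)
  have hs : HasSum (fun k : ℕ => (1 / 3 : ℝ) ^ (k + 1) * D) (D / 2) := by
    have := (hasSum_geometric_of_lt_one (r := (1 / 3 : ℝ)) (by norm_num)
      (by norm_num)).mul_right (1 / 3 * D)
    have e1 : (fun k : ℕ => (1 / 3 : ℝ) ^ (k + 1) * D)
        = fun k : ℕ => (1 / 3 : ℝ) ^ k * (1 / 3 * D) := by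
      funext k
      ring
    have e2 : D / 2 = (1 - 1 / 3 : ℝ)⁻¹ * (1 / 3 * D) := by
      norm_num
      ring
    rw [e1, e2]
    exact this
  have hle2 := Summable.tsum_le_tsum (fun k : ℕ => ?_) sf (sg.add hs.summable)
  · rw [sg.tsum_add hs.summable, hs.tsum_eq] at hle2
    linarith
  · have hk := key ((k : ℤ) + 1)
    have ht := norm_sub_norm_le (fourierCoeff (fun x => (f x : ℂ)) ((k : ℤ) + 1))
      (fourierCoeff (fun x => (g x : ℂ)) ((k : ℤ) + 1))
    rw [norm_sub_rev] at ht
    have hr : r ^ (k + 1) ≤ (1 / 3 : ℝ) ^ (k + 1) := pow_le_pow_left₀ h0 h1 _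
    have h2 := mul_le_mul_of_nonneg_right hr D0
    have h3 := mul_le_mul_of_nonneg_left (ht.trans hk) (pow_nonneg h0 (k + 1))
    rw [mul_sub] at h3
    linarith
end
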